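/- arXiv:1109.5524 — 5 statements merged into one kernel-verified Lean document; each statement's English description precedes it below -/
import Mathlib

section
/- Bilinear determinant identity on the line a = s+η1 (case (i) of the Hirota proof). Assume m1 ≥ 1 and n ≥ 1, and let s be an integer with max{−η1, η2}+1 ≤ s ≤ n1. Then, pointwise on ℂ, Δ^{⟨1,s−η2⟩,[0;0]}_{∅,⟨1,s+η1⟩,∅} · Δ^{⟨1,s−η2⟩,[0;2]}_{∅,⟨1,s+η1⟩,∅} = (−1)^{η1+n2+1} · ( Δ^{⟨2,s−η2⟩,[1;2]}_{∅,⟨1,s+η1−1⟩,∅} · Δ^{⟨1,s−η2⟩,[0;0]}_{∅,⟨2,s+η1+1⟩,∅} + Δ^{⟨2,s−η2+1⟩,[1;2]}_{∅,⟨1,s+η1⟩,∅} · Δ^{⟨1,s−η2−1⟩,[0;0]}_{∅,⟨2,s+η1⟩,∅} ). -/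
open scoped BigOperators

namespace Stmt12

/-- The integer segment tuple `⟨a,b⟩ = (a, a+1, …, b)`, empty when `b < a`. -/
def seg (a b : ℤ) : List ℤ := (List.range (b - a + 1).toNat).map (fun k => a + (k : ℤ))

/-- Product of `g x y` over ordered pairs `x ≺ y` in the list `L`. -/
def pairProd {ι : Type*} (L : List ι) (g : ι → ι → ℂ) : ℂ :=
  ∏ i : Fin L.length, ∏ j : Fin L.length, if i < j then g (L.get i) (L.get j) else 1

/-- Product of `g x` over a list. -/
def prodL {ι : Type*} (L : List ι) (g : ι → ℂ) : ℂ := (L.map g).prod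

/-- Product of `g x y` over pairs `(x, y) ∈ L × M`. -/
def prodLL {ι : Type*} (L M : List ι) (g : ι → ι → ℂ) : ℂ :=
  (L.map (fun x => (M.map (g x)).prod)).prod

/-- Determinant of the square matrix whose rows and columns are labelled by the given
key lists (by convention `0` if the two lists have different lengths). -/
noncomputable def listDet {α β : Type*} (rows : List α) (cols : List β) (e : α → β → ℂ) : ℂ :=
  if h : rows.length = cols.length then
    Matrix.det (Matrix.of fun i j : Fin rows.length =>
      e (rows.get i) (cols.get (Fin.cast h j)))
  else 0

/-- The coefficient-free sparse determinant `Δ^{R,[η;ξ]}_{S,T1,T2}` built from the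
coefficient-free Baxter Q-functions, as a function of the spectral parameter `u`. -/
noncomputable def DeltaCF {ι : Type*} (hbar : ℂ) (Qb Qf : ι → ℂ → ℂ) (Qbf : ι → ι → ℂ → ℂ)
    (B1 B2 F : List ι) (R S T1 T2 : List ℤ) (η ξ : ℤ) (u : ℂ) : ℂ :=
  listDet
    ((B1.map (Sum.inl : ι → ι ⊕ (ι ⊕ ℤ)) ++
      B2.map (fun b => (Sum.inr (Sum.inl b) : ι ⊕ (ι ⊕ ℤ))) ++
      R.map (fun r => (Sum.inr (Sum.inr r) : ι ⊕ (ι ⊕ ℤ)))))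
    ((F.map (Sum.inl : ι → ι ⊕ (ℤ ⊕ (ℤ ⊕ ℤ))) ++
      S.map (fun j => (Sum.inr (Sum.inl j) : ι ⊕ (ℤ ⊕ (ℤ ⊕ ℤ)))) ++
      T1.map (fun j => (Sum.inr (Sum.inr (Sum.inl j)) : ι ⊕ (ℤ ⊕ (ℤ ⊕ ℤ)))) ++
      T2.map (fun j => (Sum.inr (Sum.inr (Sum.inr j)) : ι ⊕ (ℤ ⊕ (ℤ ⊕ ℤ))))))
    (fun row col =>
      match row, col with
      | Sum.inl b, Sum.inl f => Qbf b f (u + (ξ : ℂ) * hbar)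
      | Sum.inl b, Sum.inr (Sum.inl j) => Qb b (u + ((ξ + 2 * j - 1 : ℤ) : ℂ) * hbar)
      | Sum.inl b, Sum.inr (Sum.inr (Sum.inl j)) =>
          Qb b (u + ((ξ + 2 * j - 1 : ℤ) : ℂ) * hbar)
      | Sum.inl _, Sum.inr (Sum.inr (Sum.inr _)) => 0
      | Sum.inr (Sum.inl b), Sum.inl f =>
          (-1 : ℂ) ^ η * Qbf b f (u + ((ξ - 2 * η : ℤ) : ℂ) * hbar)
      | Sum.inr (Sum.inl b), Sum.inr (Sum.inl j) =>
          Qb b (u + ((ξ + 2 * j - 1 : ℤ) : ℂ) * hbar)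
      | Sum.inr (Sum.inl _), Sum.inr (Sum.inr (Sum.inl _)) => 0
      | Sum.inr (Sum.inl b), Sum.inr (Sum.inr (Sum.inr j)) =>
          Qb b (u + ((ξ + 2 * j - 1 : ℤ) : ℂ) * hbar)
      | Sum.inr (Sum.inr r), Sum.inl f =>
          (-1 : ℂ) ^ (r - 1) * Qf f (u + ((ξ - 2 * r + 1 : ℤ) : ℂ) * hbar)
      | Sum.inr (Sum.inr _), Sum.inr _ => 0)

/-
Passing from `ξ = 0` to `ξ = 2` only shifts the labels in `R` and `T1` and moves the argument of
`Q_{b,f}` from `u` to `u + 2ħ`. By the QQ-relation this move adds `Q_b^{[1]} Q_f^{[1]}`, a rank one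
term that can be undone with the row labelled `r = 0` of the extended matrix. For the minor at
`[0;2]` this is a row operation; for those at `[1;2]`, where only the rows in `B1` are moved, it is
a Schur complement with respect to an artificial entry `1` in row `0` and column `1`. All six
determinants thus become minors of one matrix with rows `B1 ⊔ B2 ⊔ ⟨0,p⟩` and columns
`F ⊔ ⟨1,q+1⟩`, where `p = s - η2` and `q = s + η1`, and the identity is the Desnanot-Jacobi
identity for the rows `0`, `p` and the columns `1`, `q + 1`.
-/

section Determinant

open Matrix

variable {R m n : Type*} [CommRing R] [Fintype m] [Fintype n] [DecidableEq m] [DecidableEq n]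

theorem det_mul_det_toBlocks₁₁_adjugate (M : Matrix (m ⊕ n) (m ⊕ n) R) :
    M.det * M.adjugate.toBlocks₁₁.det = M.det ^ Fintype.card m * M.toBlocks₂₂.det := by
  have mul_eq : M * fromBlocks M.adjugate.toBlocks₁₁ 0 M.adjugate.toBlocks₂₁ 1 =
      fromBlocks (M.det • 1) M.toBlocks₁₂ 0 M.toBlocks₂₂ := by
    have mul_adjugate_inl (i : m ⊕ n) (j : m) :
        (M * M.adjugate) i (Sum.inl j) = if i = Sum.inl j then M.det else 0 := by
      simp [mul_adjugate, one_apply]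
    ext (i | i) (j | j)
    · simpa [mul_apply, one_apply, toBlocks₁₁, toBlocks₂₁] using mul_adjugate_inl (Sum.inl i) j
    · simp [mul_apply, one_apply, toBlocks₁₂]
    · simpa [mul_apply, toBlocks₁₁, toBlocks₂₁] using mul_adjugate_inl (Sum.inr i) j
    · simp [mul_apply, one_apply, toBlocks₂₂]
  have := congrArg det mul_eq
  simpa using this

theorem det_toBlocks₁₁_adjugate [Nonempty m] (M : Matrix (m ⊕ n) (m ⊕ n) R) :
    M.adjugate.toBlocks₁₁.det = M.det ^ (Fintype.card m - 1) * M.toBlocks₂₂.det := by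
  let X := mvPolynomialX (m ⊕ n) (m ⊕ n) ℤ
  have generic : X.adjugate.toBlocks₁₁.det = X.det ^ (Fintype.card m - 1) * X.toBlocks₂₂.det := by
    apply mul_left_cancel₀ (det_mvPolynomialX_ne_zero (m ⊕ n) ℤ)
    rw [det_mul_det_toBlocks₁₁_adjugate, ← mul_assoc, ← pow_succ',
      Nat.sub_add_cancel Fintype.card_pos]
  let φ : MvPolynomial ((m ⊕ n) × (m ⊕ n)) ℤ →ₐ[ℤ] R := MvPolynomial.aeval fun p ↦ M p.1 p.2
  have hM : φ.mapMatrix X = M := mvPolynomialX_mapMatrix_aeval ℤ M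
  have map_adjugate : φ.mapMatrix X.adjugate.toBlocks₁₁ = M.adjugate.toBlocks₁₁ := by
    rw [← hM, ← AlgHom.map_adjugate]
    rfl
  have map_toBlocks₂₂ : φ.mapMatrix X.toBlocks₂₂ = M.toBlocks₂₂ := by
    rw [← hM]
    rfl
  simpa only [map_mul, map_pow, AlgHom.map_det, hM, map_adjugate, map_toBlocks₂₂]
    using congrArg φ generic

theorem det_mul_det_submatrix_succ_succ {k : ℕ} (A : Matrix (Fin (k + 2)) (Fin (k + 2)) R) :
    A.det * (A.submatrix (fun i : Fin k ↦ i.succ.succ) fun j ↦ j.succ.succ).det =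
      (A.submatrix (Fin.succAbove 1) (Fin.succAbove 1)).det * (A.submatrix Fin.succ Fin.succ).det -
      (A.submatrix (Fin.succAbove 1) Fin.succ).det *
        (A.submatrix Fin.succ (Fin.succAbove 1)).det := by
  let e : Fin 2 ⊕ Fin k ≃ Fin (k + 2) := finSumFinEquiv.trans (finCongr (add_comm 2 k))
  have e_zero : e (Sum.inl 0) = 0 := rfl
  have e_one : e (Sum.inl 1) = 1 := by ext; simp [e, finSumFinEquiv]
  have e_inr (i : Fin k) : e (Sum.inr i) = i.succ.succ := by ext; simp [e, finSumFinEquiv]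
  have jacobi := det_toBlocks₁₁_adjugate (A.submatrix e e)
  simp only [adjugate_submatrix_equiv_self, det_fin_two, toBlocks₁₁, toBlocks₂₂, of_apply,
    submatrix_apply, det_submatrix_equiv_self, Fintype.card_fin, e_zero, e_one, e_inr,
    adjugate_fin_succ_eq_det_submatrix] at jacobi
  simpa [mul_comm (Matrix.det _) A.det, submatrix, Fin.succAbove_zero, mul_comm] using jacobi.symm

theorem det_eq_det_sub_of_apply_zero_zero_eq_one {k : ℕ}
    (A : Matrix (Fin (k + 1)) (Fin (k + 1)) R) (h : A 0 0 = 1) :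
    A.det = (of fun i j : Fin k ↦ A i.succ j.succ - A i.succ 0 * A 0 j.succ).det := by
  let e : Fin 1 ⊕ Fin k ≃ Fin (k + 1) := finSumFinEquiv.trans (finCongr (add_comm 1 k))
  have e_inl (i : Fin 1) : e (Sum.inl i) = 0 := by ext; simp [e, finSumFinEquiv]
  have e_inr (i : Fin k) : e (Sum.inr i) = i.succ := by ext; simp [e, finSumFinEquiv]
  have toBlocks₁₁_eq_one : (A.submatrix e e).toBlocks₁₁ = 1 := by
    ext i j
    rw [Subsingleton.elim i j]
    simp [toBlocks₁₁, e_inl, h]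
  rw [← det_submatrix_equiv_self e, ← fromBlocks_toBlocks (A.submatrix e e), toBlocks₁₁_eq_one,
    det_fromBlocks_one₁₁]
  congr 1
  ext i j
  simp [toBlocks₁₂, toBlocks₂₁, toBlocks₂₂, mul_apply, e_inl, e_inr]

end Determinant

section ListDet

variable {α β : Type*} {X : List α} {Y : List β} {e e' : α → β → ℂ}

theorem listDet_of_length_ne (h : X.length ≠ Y.length) : listDet X Y e = 0 :=
  dif_neg h

theorem listDet_eq_det {k : ℕ} (hX : X.length = k) (hY : Y.length = k) :
    listDet X Y e = (Matrix.of fun i j : Fin k ↦ e X[i] Y[j]).det := by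
  subst hX
  exact dif_pos hY.symm

theorem listDet_congr (h : ∀ x ∈ X, ∀ y ∈ Y, e x y = e' x y) : listDet X Y e = listDet X Y e' := by
  simp only [listDet, h _ (List.get_mem _ _) _ (List.get_mem _ _)]

theorem listDet_swap (X : List α) (Y : List β) (e : α → β → ℂ) :
    listDet X Y e = listDet Y X fun y x ↦ e x y := by
  by_cases h : X.length = Y.length
  · rw [listDet_eq_det rfl h.symm, listDet_eq_det h.symm rfl, ← Matrix.det_transpose]
    rfl
  · rw [listDet_of_length_ne h, listDet_of_length_ne (Ne.symm h)]

theorem listDet_map {α' β' : Type*} (f : α → α') (g : β → β') (e : α' → β' → ℂ) :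
    listDet (X.map f) (Y.map g) e = listDet X Y fun x y ↦ e (f x) (g y) := by
  by_cases h : X.length = Y.length
  · rw [listDet_eq_det (k := X.length) (by simp) (by simp [h]), listDet_eq_det rfl h.symm]
    simp only [Fin.getElem_fin, List.getElem_map]
  · rw [listDet_of_length_ne h, listDet_of_length_ne (by simpa using h)]

theorem listDet_mul_row (s : α → ℂ) (e : α → β → ℂ) :
    listDet X Y (fun x y ↦ s x * e x y) = (X.map s).prod * listDet X Y e := by
  by_cases h : X.length = Y.length
  · rw [listDet_eq_det rfl h.symm, listDet_eq_det rfl h.symm, ← Fin.prod_univ_fun_getElem]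
    exact Matrix.det_mul_column (fun i : Fin X.length ↦ s X[i]) _
  · rw [listDet_of_length_ne h, listDet_of_length_ne h, mul_zero]

theorem listDet_cons_add_mul_row (a : α) (t : α → ℂ) (head : ∀ y ∈ Y, e' a y = e a y)
    (tail : ∀ x ∈ X, ∀ y ∈ Y, e' x y = e x y + t x * e a y) :
    listDet (a :: X) Y e' = listDet (a :: X) Y e := by
  by_cases h : (a :: X).length = Y.length
  · rw [listDet_eq_det (k := X.length + 1) rfl h.symm,
      listDet_eq_det (k := X.length + 1) rfl h.symm]
    refine Matrix.det_eq_of_forall_row_eq_smul_add_const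
      (Fin.cons (α := fun _ ↦ ℂ) 0 fun i : Fin X.length ↦ t X[i]) 0 rfl ?_
    intro i j
    cases i using Fin.cases with
    | zero => simpa using head _ (List.getElem_mem _)
    | succ i => simpa using tail _ (List.getElem_mem _) _ (List.getElem_mem _)
  · rw [listDet_of_length_ne h, listDet_of_length_ne h]

theorem listDet_cons_cons_of_pivot {a : α} {c : β} (h : e a c = 1) :
    listDet (a :: X) (c :: Y) e = listDet X Y fun x y ↦ e x y - e x c * e a y := by
  by_cases hXY : X.length = Y.length
  · rw [listDet_eq_det (k := X.length + 1) rfl (congrArg (· + 1) hXY.symm),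
      listDet_eq_det rfl hXY.symm]
    exact det_eq_det_sub_of_apply_zero_zero_eq_one _ h
  · rw [listDet_of_length_ne hXY, listDet_of_length_ne (by simpa using hXY)]

theorem getElem_cons_cycleRange {X₁ X₂ : List α} {a : α} (p i : Fin (X₁.length + X₂.length + 1))
    (hp : p = X₁.length) :
    (a :: (X₁ ++ X₂))[p.cycleRange i]'(by simp; omega) = (X₁ ++ a :: X₂)[i]'(by simp; omega) := by
  rcases lt_trichotomy i p with hi | rfl | hi
  · have : (p.cycleRange i : ℕ) = i + 1 := by
      rw [Fin.cycleRange_of_lt hi, Fin.val_add_one_of_lt (hi.trans_le (Fin.le_last p))]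
    have : (i : ℕ) < X₁.length := by omega
    simp [*, List.getElem_append_left]
  · simp [hp]
  · simp only [Fin.cycleRange_of_gt hi]
    grind

theorem listDet_append_cons (X₁ X₂ : List α) (a : α) (Y : List β) (e : α → β → ℂ) :
    listDet (X₁ ++ a :: X₂) Y e = (-1) ^ X₁.length * listDet (a :: (X₁ ++ X₂)) Y e := by
  have cons_length : (a :: (X₁ ++ X₂)).length = X₁.length + X₂.length + 1 := by simp
  have append_length : (X₁ ++ a :: X₂).length = X₁.length + X₂.length + 1 := by simp; omega
  by_cases h : X₁.length + X₂.length + 1 = Y.length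
  · let p : Fin (X₁.length + X₂.length + 1) := ⟨X₁.length, by omega⟩
    rw [listDet_eq_det append_length h.symm, listDet_eq_det cons_length h.symm]
    let M : Matrix (Fin (X₁.length + X₂.length + 1)) (Fin (X₁.length + X₂.length + 1)) ℂ :=
      Matrix.of fun i j ↦ e (a :: (X₁ ++ X₂))[i] Y[j]
    have permuted :
        Matrix.of (fun i j ↦ e (X₁ ++ a :: X₂)[i] Y[j]) = M.submatrix p.cycleRange id := by
      ext i j
      exact congrArg (e · Y[j]) (getElem_cons_cycleRange p i rfl).symm
    rw [permuted, Matrix.det_permute, Fin.sign_cycleRange]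
    simp [M, p]
  · rw [listDet_of_length_ne (by omega), listDet_of_length_ne (by omega), mul_zero]

theorem listDet_append_cons_right (X : List α) (Y₁ Y₂ : List β) (c : β) (e : α → β → ℂ) :
    listDet X (Y₁ ++ c :: Y₂) e = (-1) ^ Y₁.length * listDet X (c :: (Y₁ ++ Y₂)) e := by
  rw [listDet_swap, listDet_append_cons, ← listDet_swap]

theorem listDet_append_singleton (X : List α) (a : α) (Y : List β) (e : α → β → ℂ) :
    listDet (X ++ [a]) Y e = (-1) ^ X.length * listDet (a :: X) Y e := by
  rw [listDet_append_cons, List.append_nil]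

theorem listDet_append_singleton_right (X : List α) (Y : List β) (c : β) (e : α → β → ℂ) :
    listDet X (Y ++ [c]) e = (-1) ^ Y.length * listDet X (c :: Y) e := by
  rw [listDet_append_cons_right, List.append_nil]

theorem getElem_cons_cons_succAbove_one {k : ℕ} (a b : α) (hX : X.length = k) (i : Fin (k + 1)) :
    (a :: b :: X)[Fin.succAbove 1 i]'(by simp; omega) = (a :: X)[i]'(by simp; omega) := by
  cases i using Fin.cases <;> simp

theorem listDet_mul_listDet_cons_cons (h : X.length = Y.length) (a b : α) (c d : β)
    (e : α → β → ℂ) :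
    listDet (a :: b :: X) (c :: d :: Y) e * listDet X Y e =
      listDet (a :: X) (c :: Y) e * listDet (b :: X) (d :: Y) e -
      listDet (a :: X) (d :: Y) e * listDet (b :: X) (c :: Y) e := by
  have cons_length (y : β) : (y :: Y).length = X.length + 1 := congrArg (· + 1) h.symm
  have cons_cons_length : (c :: d :: Y).length = X.length + 2 := congrArg (· + 2) h.symm
  have dodgson := det_mul_det_submatrix_succ_succ (Matrix.of fun i j : Fin (X.length + 2) ↦
    e (a :: b :: X)[i] (c :: d :: Y)[j])
  simp only [Matrix.submatrix, Matrix.of_apply, getElem_cons_cons_succAbove_one a b rfl,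
    getElem_cons_cons_succAbove_one c d h.symm] at dodgson
  simp only [listDet_eq_det (List.length_cons ..) (cons_length _)]
  rw [listDet_eq_det rfl h.symm, listDet_eq_det (k := X.length + 2) rfl cons_cons_length]
  exact dodgson

end ListDet

section Seg

variable {a b : ℤ}

/- In `seg` the variable `k` is elaborated as an integer, so that the list of naturals is first cast
to a list of integers (by the coercion through the list monad); this cast is removed here. -/
theorem seg_eq_map_range (a b : ℤ) :
    seg a b = (List.range (b - a + 1).toNat).map fun k : ℕ ↦ a + (k : ℤ) := by
  rw [List.map_eq_flatMap]
  simp [seg, List.map_flatMap]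

theorem mem_seg {x : ℤ} : x ∈ seg a b ↔ a ≤ x ∧ x ≤ b := by
  simp only [seg_eq_map_range, List.mem_map, List.mem_range]
  constructor
  · rintro ⟨k, hk, rfl⟩
    omega
  · rintro ⟨hax, hxb⟩
    exact ⟨(x - a).toNat, by omega, by omega⟩

theorem length_seg (a b : ℤ) : (seg a b).length = (b - a + 1).toNat := by
  simp [seg_eq_map_range]

theorem map_add_right_seg (a b k : ℤ) : (seg a b).map (· + k) = seg (a + k) (b + k) := by
  rw [seg_eq_map_range, seg_eq_map_range, List.map_map, add_sub_add_right_eq_sub]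
  exact List.map_congr_left fun i _ ↦ add_right_comm a i k

theorem map_sub_right_seg (a b k : ℤ) : (seg a b).map (· - k) = seg (a - k) (b - k) := by
  simpa only [sub_eq_add_neg] using map_add_right_seg a b (-k)

theorem seg_eq_cons (h : a ≤ b) : seg a b = a :: seg (a + 1) b := by
  have length_succ : (b - a + 1).toNat = (b - (a + 1) + 1).toNat + 1 := by omega
  simp only [seg_eq_map_range, length_succ, List.range_succ_eq_map, List.map_cons, List.map_map,
    Nat.cast_zero, add_zero]
  refine congrArg (a :: ·) (List.map_congr_left fun i _ ↦ ?_)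
  simp only [Function.comp_apply, Nat.cast_succ]
  ring

theorem seg_eq_append_singleton (h : a ≤ b) : seg a b = seg a (b - 1) ++ [b] := by
  have length_succ : (b - a + 1).toNat = (b - 1 - a + 1).toNat + 1 := by omega
  have last : a + ((b - 1 - a + 1).toNat : ℤ) = b := by omega
  simp only [seg_eq_map_range, length_succ, List.range_succ, List.map_append, List.map_cons,
    List.map_nil, last]

end Seg

section QMatrix

variable {ι : Type*} {hbar : ℂ} {Qb Qf : ι → ℂ → ℂ} {Qbf : ι → ι → ℂ → ℂ} {B1 B2 F : List ι}
  {R T : List ℤ} {u : ℂ}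

/-- The QQ-relation `Q_b Q_f = Q_{b,f}^{[1]} - Q_{b,f}^{[-1]}` for all `b` in `B` and `f` in `F`. -/
def QQRelation (hbar : ℂ) (Qb Qf : ι → ℂ → ℂ) (Qbf : ι → ι → ℂ → ℂ) (B F : List ι) : Prop :=
  ∀ b ∈ B, ∀ f ∈ F, ∀ u : ℂ, Qb b u * Qf f u = Qbf b f (u + hbar) - Qbf b f (u - hbar)

/-- The row labels `B1 ⊔ B2 ⊔ R`. -/
def rowLabels (B1 B2 : List ι) (R : List ℤ) : List (ι ⊕ (ι ⊕ ℤ)) :=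
  B1.map Sum.inl ++ B2.map (fun b ↦ Sum.inr (Sum.inl b)) ++ R.map fun r ↦ Sum.inr (Sum.inr r)

/-- The column labels `F ⊔ T`, where `T` plays the role of `T1` while `S` and `T2` are empty. -/
def colLabels (F : List ι) (T : List ℤ) : List (ι ⊕ ℤ) :=
  F.map Sum.inl ++ T.map Sum.inr

/-- The doubly infinite matrix from which the minors `Δ` are taken, with the entries at `B1 × F` and
`B2 × F` left as parameters `G₁` and `G₂`. It deviates from the matrix of `DeltaCF` at `[0;0]` in
the entry `1` at row label `0` and column label `1`: this pivot turns the minors at `[1;2]` into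
minors of the same matrix. -/
noncomputable def qMatrix (hbar : ℂ) (Qb Qf : ι → ℂ → ℂ) (G₁ G₂ : ι → ι → ℂ) (u : ℂ) :
    ι ⊕ (ι ⊕ ℤ) → ι ⊕ ℤ → ℂ
  | Sum.inl b, Sum.inl f => G₁ b f
  | Sum.inl b, Sum.inr j => Qb b (u + ((2 * j - 1 : ℤ) : ℂ) * hbar)
  | Sum.inr (Sum.inl b), Sum.inl f => G₂ b f
  | Sum.inr (Sum.inl _), Sum.inr _ => 0
  | Sum.inr (Sum.inr r), Sum.inl f => (-1) ^ (r - 1) * Qf f (u + ((1 - 2 * r : ℤ) : ℂ) * hbar)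
  | Sum.inr (Sum.inr r), Sum.inr j => if r = 0 ∧ j = 1 then 1 else 0

theorem mem_rowLabels {x : ι ⊕ (ι ⊕ ℤ)} :
    x ∈ rowLabels B1 B2 R ↔ (∃ b ∈ B1, Sum.inl b = x) ∨
      (∃ b ∈ B2, Sum.inr (Sum.inl b) = x) ∨ ∃ r ∈ R, Sum.inr (Sum.inr r) = x := by
  simp [rowLabels]

theorem mem_colLabels {y : ι ⊕ ℤ} :
    y ∈ colLabels F T ↔ (∃ f ∈ F, Sum.inl f = y) ∨ ∃ j ∈ T, Sum.inr j = y := by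
  simp [colLabels]

theorem length_rowLabels (B1 B2 : List ι) (R : List ℤ) :
    (rowLabels B1 B2 R).length = B1.length + B2.length + R.length := by
  simp [rowLabels, add_assoc]

theorem length_colLabels (F : List ι) (T : List ℤ) :
    (colLabels F T).length = F.length + T.length := by
  simp [colLabels]

theorem rowLabels_append_singleton (B1 B2 : List ι) (R : List ℤ) (r : ℤ) :
    rowLabels B1 B2 (R ++ [r]) = rowLabels B1 B2 R ++ [Sum.inr (Sum.inr r)] := by
  simp [rowLabels]

theorem colLabels_append_singleton (F : List ι) (T : List ℤ) (j : ℤ) :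
    colLabels F (T ++ [j]) = colLabels F T ++ [Sum.inr j] := by
  simp [colLabels]

theorem listDet_rowLabels_cons {β : Type*} (r : ℤ) (Y : List β) (e : ι ⊕ (ι ⊕ ℤ) → β → ℂ) :
    listDet (rowLabels B1 B2 (r :: R)) Y e = (-1) ^ (B1.length + B2.length) *
      listDet (Sum.inr (Sum.inr r) :: rowLabels B1 B2 R) Y e := by
  simpa [rowLabels] using listDet_append_cons (rowLabels B1 B2 [])
    (R.map fun r ↦ Sum.inr (Sum.inr r)) (Sum.inr (Sum.inr r)) Y e

theorem listDet_colLabels_cons {α : Type*} (j : ℤ) (X : List α) (e : α → ι ⊕ ℤ → ℂ) :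
    listDet X (colLabels F (j :: T)) e =
      (-1) ^ F.length * listDet X (Sum.inr j :: colLabels F T) e := by
  simpa [colLabels] using
    listDet_append_cons_right X (F.map Sum.inl) (T.map Sum.inr) (Sum.inr j) e

variable (hbar Qb Qf Qbf B1 B2 F u) in
theorem DeltaCF_map_add_eq (κ η : ℤ) (h : 0 ∉ R ∨ 1 ∉ T) :
    DeltaCF hbar Qb Qf Qbf B1 B2 F (R.map (· + κ)) [] (T.map (· - κ)) [] η (2 * κ) u =
      ((-1) ^ η) ^ B2.length * ((-1) ^ κ) ^ R.length *
        listDet (rowLabels B1 B2 R) (colLabels F T)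
          (qMatrix hbar Qb Qf (fun b f ↦ Qbf b f (u + ((2 * κ : ℤ) : ℂ) * hbar))
            (fun b f ↦ Qbf b f (u + ((2 * κ - 2 * η : ℤ) : ℂ) * hbar)) u) := by
  let rowSign : ι ⊕ (ι ⊕ ℤ) → ℂ := Sum.elim 1 (Sum.elim (fun _ ↦ (-1) ^ η) fun _ ↦ (-1) ^ κ)
  let row : ι ⊕ (ι ⊕ ℤ) → ι ⊕ (ι ⊕ ℤ) := Sum.map id (Sum.map id (· + κ))
  let col : ι ⊕ ℤ → ι ⊕ (ℤ ⊕ (ℤ ⊕ ℤ)) := Sum.map id fun j ↦ Sum.inr (Sum.inl (j - κ))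
  have rowSign_prod : ((rowLabels B1 B2 R).map rowSign).prod =
      ((-1) ^ η) ^ B2.length * ((-1) ^ κ) ^ R.length := by
    simp [rowLabels, rowSign, Function.comp_def]
  rw [← rowSign_prod, ← listDet_mul_row, DeltaCF]
  have rows_eq : B1.map (Sum.inl : ι → ι ⊕ (ι ⊕ ℤ)) ++
      B2.map (fun b ↦ Sum.inr (Sum.inl b)) ++
      (R.map (· + κ)).map (fun r ↦ Sum.inr (Sum.inr r)) = (rowLabels B1 B2 R).map row := by
    simp [rowLabels, row, Function.comp_def]
  have cols_eq : F.map (Sum.inl : ι → ι ⊕ (ℤ ⊕ (ℤ ⊕ ℤ))) ++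
      ([] : List ℤ).map (fun j ↦ Sum.inr (Sum.inl j)) ++
      (T.map (· - κ)).map (fun j ↦ Sum.inr (Sum.inr (Sum.inl j))) ++
      ([] : List ℤ).map (fun j ↦ Sum.inr (Sum.inr (Sum.inr j))) = (colLabels F T).map col := by
    simp [colLabels, col, Function.comp_def]
  rw [rows_eq, cols_eq, listDet_map]
  refine listDet_congr fun x hx y hy ↦ ?_
  rw [mem_rowLabels] at hx
  rw [mem_colLabels] at hy
  rcases hx with ⟨b, -, rfl⟩ | ⟨b, -, rfl⟩ | ⟨r, hr, rfl⟩ <;>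
    rcases hy with ⟨f, -, rfl⟩ | ⟨j, hj, rfl⟩ <;>
    simp only [row, col, rowSign, qMatrix, Sum.map_inl, Sum.map_inr, Sum.elim_inl, Sum.elim_inr,
      Pi.one_apply, id, one_mul, mul_zero]
  · congr 3
    push_cast
    ring
  · rw [show r + κ - 1 = κ + (r - 1) by ring, zpow_add₀ (by simp), mul_assoc]
    congr 5
    push_cast
    ring
  · have : ¬ (r = 0 ∧ j = 1) := by
      rintro ⟨rfl, rfl⟩
      exact h.elim (· hr) (· hj)
    rw [if_neg this, mul_zero]

theorem DeltaCF_zero_zero_eq (h : 0 ∉ R ∨ 1 ∉ T) :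
    DeltaCF hbar Qb Qf Qbf B1 B2 F R [] T [] 0 0 u =
      listDet (rowLabels B1 B2 R) (colLabels F T)
        (qMatrix hbar Qb Qf (Qbf · · u) (Qbf · · u) u) := by
  simpa using DeltaCF_map_add_eq hbar Qb Qf Qbf B1 B2 F u 0 0 h

theorem Qbf_add_two {B : List ι} (hQQ : QQRelation hbar Qb Qf Qbf B F) {b f : ι} (hb : b ∈ B)
    (hf : f ∈ F) (u : ℂ) :
    Qbf b f (u + 2 * hbar) = Qbf b f u + Qb b (u + hbar) * Qf f (u + hbar) := by
  rw [hQQ b hb f hf, add_sub_cancel_right, add_sub_cancel, add_assoc, two_mul]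

theorem listDet_qMatrix_add_two (hQQ : QQRelation hbar Qb Qf Qbf (B1 ++ B2) F) (hT : 1 ∉ T) :
    listDet (Sum.inr (Sum.inr 0) :: rowLabels B1 B2 R) (colLabels F T)
        (qMatrix hbar Qb Qf (Qbf · · (u + 2 * hbar)) (Qbf · · (u + 2 * hbar)) u) =
      listDet (Sum.inr (Sum.inr 0) :: rowLabels B1 B2 R) (colLabels F T)
        (qMatrix hbar Qb Qf (Qbf · · u) (Qbf · · u) u) := by
  let multiple : ι ⊕ (ι ⊕ ℤ) → ℂ :=
    Sum.elim (fun b ↦ -Qb b (u + hbar)) (Sum.elim (fun b ↦ -Qb b (u + hbar)) 0)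
  refine listDet_cons_add_mul_row _ multiple ?_ fun x hx y hy ↦ ?_
  · rintro (f | j) - <;> rfl
  · rw [mem_rowLabels] at hx
    rw [mem_colLabels] at hy
    rcases hx with ⟨b, hb, rfl⟩ | ⟨b, hb, rfl⟩ | ⟨r, -, rfl⟩ <;>
      rcases hy with ⟨f, hf, rfl⟩ | ⟨j, hj, rfl⟩
    · simp [multiple, qMatrix, Qbf_add_two hQQ (List.mem_append_left B2 hb) hf]
    · simp [qMatrix, ne_of_mem_of_not_mem hj hT]
    · simp [multiple, qMatrix, Qbf_add_two hQQ (List.mem_append_right B1 hb) hf]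
    · simp [qMatrix, ne_of_mem_of_not_mem hj hT]
    · simp [multiple, qMatrix]
    · simp [qMatrix, ne_of_mem_of_not_mem hj hT]

theorem listDet_qMatrix_cons_cons (hQQ : QQRelation hbar Qb Qf Qbf (B1 ++ B2) F) (hR : 0 ∉ R)
    (hT : 1 ∉ T) :
    listDet (Sum.inr (Sum.inr 0) :: rowLabels B1 B2 R) (Sum.inr 1 :: colLabels F T)
        (qMatrix hbar Qb Qf (Qbf · · u) (Qbf · · u) u) =
      listDet (rowLabels B1 B2 R) (colLabels F T)
        (qMatrix hbar Qb Qf (Qbf · · (u + 2 * hbar)) (Qbf · · u) u) := by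
  rw [listDet_cons_cons_of_pivot (by simp [qMatrix])]
  refine listDet_congr fun x hx y hy ↦ ?_
  rw [mem_rowLabels] at hx
  rw [mem_colLabels] at hy
  rcases hx with ⟨b, hb, rfl⟩ | ⟨b, -, rfl⟩ | ⟨r, hr, rfl⟩ <;>
    rcases hy with ⟨f, hf, rfl⟩ | ⟨j, hj, rfl⟩
  · simp [qMatrix, Qbf_add_two hQQ (List.mem_append_left B2 hb) hf]
  · simp [qMatrix, ne_of_mem_of_not_mem hj hT]
  · simp [qMatrix]
  · simp [qMatrix]
  · simp [qMatrix, ne_of_mem_of_not_mem hr hR]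
  · simp [qMatrix, ne_of_mem_of_not_mem hr hR]

theorem DeltaCF_zero_two_eq (hQQ : QQRelation hbar Qb Qf Qbf (B1 ++ B2) F) (hT : 1 ∉ T) :
    DeltaCF hbar Qb Qf Qbf B1 B2 F ((0 :: R).map (· + 1)) [] (T.map (· - 1)) [] 0 2 u =
      (-1) ^ (B1.length + B2.length + R.length + 1) *
        listDet (Sum.inr (Sum.inr 0) :: rowLabels B1 B2 R) (colLabels F T)
          (qMatrix hbar Qb Qf (Qbf · · u) (Qbf · · u) u) := by
  have shifted := DeltaCF_map_add_eq hbar Qb Qf Qbf B1 B2 F u (R := 0 :: R) 1 0 (Or.inr hT)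
  rw [listDet_rowLabels_cons] at shifted
  simp only [mul_one, mul_zero, sub_zero, zpow_zero, zpow_one, one_pow, one_mul, List.length_cons,
    Int.cast_ofNat, listDet_qMatrix_add_two hQQ hT] at shifted
  rw [shifted]
  ring

theorem DeltaCF_one_two_eq (hQQ : QQRelation hbar Qb Qf Qbf (B1 ++ B2) F) (hR : 0 ∉ R)
    (hT : 1 ∉ T) :
    DeltaCF hbar Qb Qf Qbf B1 B2 F (R.map (· + 1)) [] (T.map (· - 1)) [] 1 2 u =
      (-1) ^ (B2.length + R.length) *
        listDet (Sum.inr (Sum.inr 0) :: rowLabels B1 B2 R) (Sum.inr 1 :: colLabels F T)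
          (qMatrix hbar Qb Qf (Qbf · · u) (Qbf · · u) u) := by
  rw [listDet_qMatrix_cons_cons hQQ hR hT, pow_add]
  simpa using DeltaCF_map_add_eq hbar Qb Qf Qbf B1 B2 F u 1 1 (Or.inr hT)

end QMatrix

theorem bilinear_case_i_general {ι : Type*} {hbar : ℂ} {Qb Qf : ι → ℂ → ℂ}
    {Qbf : ι → ι → ℂ → ℂ} {B1 B2 F : List ι}
    (hQQ : QQRelation hbar Qb Qf Qbf (B1 ++ B2) F)
    {p q : ℤ} (hp : 1 ≤ p) (hq : 1 ≤ q)
    (hpq : (B1.length : ℤ) + B2.length + p = F.length + q) (u : ℂ) :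
    DeltaCF hbar Qb Qf Qbf B1 B2 F (seg 1 p) [] (seg 1 q) [] 0 0 u *
        DeltaCF hbar Qb Qf Qbf B1 B2 F (seg 1 p) [] (seg 1 q) [] 0 2 u =
      (-1) ^ (B1.length + F.length + 1) *
        (DeltaCF hbar Qb Qf Qbf B1 B2 F (seg 2 p) [] (seg 1 (q - 1)) [] 1 2 u *
            DeltaCF hbar Qb Qf Qbf B1 B2 F (seg 1 p) [] (seg 2 (q + 1)) [] 0 0 u +
          DeltaCF hbar Qb Qf Qbf B1 B2 F (seg 2 (p + 1)) [] (seg 1 q) [] 1 2 u *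
            DeltaCF hbar Qb Qf Qbf B1 B2 F (seg 1 (p - 1)) [] (seg 2 q) [] 0 0 u) := by
  have seg_one_p : seg 1 p = seg 1 (p - 1) ++ [p] := seg_eq_append_singleton hp
  have seg_one_q : seg 1 q = 1 :: seg 2 q := seg_eq_cons hq
  have seg_two_q : seg 2 (q + 1) = seg 2 q ++ [q + 1] := by
    simpa using seg_eq_append_singleton (a := 2) (b := q + 1) (by omega)
  have zero_cons_seg : 0 :: seg 1 (p - 1) = seg 0 (p - 1) := (seg_eq_cons (by omega)).symm
  have Δ₀₂ := DeltaCF_zero_two_eq (R := seg 1 (p - 1)) (T := seg 2 (q + 1)) (u := u) hQQ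
    (by simp [mem_seg])
  have Δ₁₂ := DeltaCF_one_two_eq (R := seg 1 (p - 1)) (T := seg 2 q) (u := u) hQQ
    (by simp [mem_seg]) (by simp [mem_seg])
  have Δ₁₂' := DeltaCF_one_two_eq (R := seg 1 p) (T := seg 2 (q + 1)) (u := u) hQQ
    (by simp [mem_seg]) (by simp [mem_seg])
  simp only [zero_cons_seg, map_add_right_seg, map_sub_right_seg, zero_add, one_add_one_eq_two,
    sub_add_cancel, add_sub_cancel_right, Int.reduceSub] at Δ₀₂ Δ₁₂ Δ₁₂'
  rw [Δ₀₂, Δ₁₂, Δ₁₂', DeltaCF_zero_zero_eq (by simp [mem_seg]),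
    DeltaCF_zero_zero_eq (by simp [mem_seg]), DeltaCF_zero_zero_eq (by simp [mem_seg])]
  simp only [seg_one_p, seg_one_q, seg_two_q, listDet_colLabels_cons, rowLabels_append_singleton,
    colLabels_append_singleton, ← List.cons_append, listDet_append_singleton,
    listDet_append_singleton_right, List.length_cons, List.length_append, List.length_nil]
  have length_eq : (rowLabels B1 B2 (seg 1 (p - 1))).length = (colLabels F (seg 2 q)).length := by
    rw [length_rowLabels, length_colLabels, length_seg, length_seg]
    omega
  have desnanot_jacobi := listDet_mul_listDet_cons_cons length_eq (Sum.inr (Sum.inr p))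
    (Sum.inr (Sum.inr 0)) (Sum.inr (q + 1)) (Sum.inr 1)
    (qMatrix hbar Qb Qf (Qbf · · u) (Qbf · · u) u)
  rw [length_eq]
  simp only [pow_add, pow_one]
  linear_combination -((-1) ^ B1.length * (-1) ^ B2.length * (-1) ^ F.length *
    (-1) ^ (seg 1 (p - 1)).length * ((-1) ^ (colLabels F (seg 2 q)).length) ^ 2) * desnanot_jacobi

theorem neg_one_zpow_sub_add_add_one {K : Type*} [DivisionRing K] (a b c : ℕ) :
    (-1 : K) ^ ((a : ℤ) - b + c + 1) = (-1) ^ (a + (b + c) + 1) := by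
  have exponent_eq : (a : ℤ) - b + c + 1 = ((a + (b + c) + 1 : ℕ) : ℤ) - 2 * b := by
    push_cast
    ring
  rw [exponent_eq, zpow_sub₀ (by simp), zpow_mul, zpow_natCast]
  simp

/-- **Bilinear determinant identity on the line `a = s + η1` (case (i) of the
Hirota proof).** -/
theorem bilinear_case_i {ι : Type*} (hbar : ℂ) (hbar_ne : hbar ≠ 0)
    (Qb Qf : ι → ℂ → ℂ) (Qbf : ι → ι → ℂ → ℂ)
    (B1 B2 F1 F2 : List ι) (hnd : (B1 ++ B2 ++ F1 ++ F2).Nodup)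
    (hQQ : ∀ b ∈ B1 ++ B2, ∀ f ∈ F1 ++ F2, ∀ u : ℂ,
      Qb b u * Qf f u = Qbf b f (u + hbar) - Qbf b f (u - hbar))
    (hm1 : 1 ≤ B1.length) (hn : 1 ≤ F1.length + F2.length)
    (s : ℤ)
    (hs1 : -((B1.length : ℤ) - F1.length) + 1 ≤ s)
    (hs2 : ((B2.length : ℤ) - F2.length) + 1 ≤ s)
    (hs3 : s ≤ (F1.length : ℤ)) :
    ∀ u : ℂ,
      DeltaCF hbar Qb Qf Qbf B1 B2 (F1 ++ F2)
          (seg 1 (s - ((B2.length : ℤ) - F2.length))) []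
          (seg 1 (s + ((B1.length : ℤ) - F1.length))) [] 0 0 u *
        DeltaCF hbar Qb Qf Qbf B1 B2 (F1 ++ F2)
          (seg 1 (s - ((B2.length : ℤ) - F2.length))) []
          (seg 1 (s + ((B1.length : ℤ) - F1.length))) [] 0 2 u =
      (-1 : ℂ) ^ (((B1.length : ℤ) - F1.length) + (F2.length : ℤ) + 1) *
        (DeltaCF hbar Qb Qf Qbf B1 B2 (F1 ++ F2)
            (seg 2 (s - ((B2.length : ℤ) - F2.length))) []
            (seg 1 (s + ((B1.length : ℤ) - F1.length) - 1)) [] 1 2 u *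
          DeltaCF hbar Qb Qf Qbf B1 B2 (F1 ++ F2)
            (seg 1 (s - ((B2.length : ℤ) - F2.length))) []
            (seg 2 (s + ((B1.length : ℤ) - F1.length) + 1)) [] 0 0 u +
         DeltaCF hbar Qb Qf Qbf B1 B2 (F1 ++ F2)
            (seg 2 (s - ((B2.length : ℤ) - F2.length) + 1)) []
            (seg 1 (s + ((B1.length : ℤ) - F1.length))) [] 1 2 u *
          DeltaCF hbar Qb Qf Qbf B1 B2 (F1 ++ F2)
            (seg 1 (s - ((B2.length : ℤ) - F2.length) - 1)) []
            (seg 2 (s + ((B1.length : ℤ) - F1.length))) [] 0 0 u) := by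
  intro u
  rw [bilinear_case_i_general hQQ (by omega) (by omega) (by rw [List.length_append]; omega),
    neg_one_zpow_sub_add_add_one, List.length_append]

end Stmt12
end

section
/- Bilinear determinant identity on the line a = −s+η2 (case (v) of the Hirota proof). Assume m2 ≥ 1 and n ≥ 1, and let s be an integer with −n2 ≤ s ≤ min{−η1, η2}−1. Then, pointwise on ℂ, Δ^{⟨s+η1+2,1⟩,[1;2]}_{∅,∅,⟨s−η2,−1⟩} · Δ^{⟨s+η1+1,0⟩,[0;2]}_{∅,∅,⟨s−η2+1,0⟩} = −Δ^{⟨s+η1+1,0⟩,[0;2]}_{∅,∅,⟨s−η2,−1⟩} · Δ^{⟨s+η1+2,0⟩,[1;2]}_{∅,∅,⟨s−η2+1,−1⟩} − Δ^{⟨s+η1+2,0⟩,[0;2]}_{∅,∅,⟨s−η2+1,−1⟩} · Δ^{⟨s+η1+1,0⟩,[1;2]}_{∅,∅,⟨s−η2,−1⟩}. -/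
open scoped BigOperators

namespace Stmt13

/-- The integer segment tuple `⟨a,b⟩ = (a, a+1, …, b)`, empty when `b < a`. -/
def seg (a b : ℤ) : List ℤ := (List.range (b - a + 1).toNat).map (fun k => a + (k : ℤ))

/-- Product of `g x y` over ordered pairs `x ≺ y` in the list `L`. -/
def pairProd {ι : Type*} (L : List ι) (g : ι → ι → ℂ) : ℂ :=
  ∏ i : Fin L.length, ∏ j : Fin L.length, if i < j then g (L.get i) (L.get j) else 1

/-- Product of `g x` over a list. -/
def prodL {ι : Type*} (L : List ι) (g : ι → ℂ) : ℂ := (L.map g).prod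

/-- Product of `g x y` over pairs `(x, y) ∈ L × M`. -/
def prodLL {ι : Type*} (L M : List ι) (g : ι → ι → ℂ) : ℂ :=
  (L.map (fun x => (M.map (g x)).prod)).prod

/-- Determinant of the square matrix whose rows and columns are labelled by the given
key lists (by convention `0` if the two lists have different lengths). -/
noncomputable def listDet {α β : Type*} (rows : List α) (cols : List β) (e : α → β → ℂ) : ℂ :=
  if h : rows.length = cols.length then
    Matrix.det (Matrix.of fun i j : Fin rows.length =>
      e (rows.get i) (cols.get (Fin.cast h j)))
  else 0

/-- The coefficient-free sparse determinant `Δ^{R,[η;ξ]}_{S,T1,T2}` built from the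
coefficient-free Baxter Q-functions, as a function of the spectral parameter `u`. -/
noncomputable def DeltaCF {ι : Type*} (hbar : ℂ) (Qb Qf : ι → ℂ → ℂ) (Qbf : ι → ι → ℂ → ℂ)
    (B1 B2 F : List ι) (R S T1 T2 : List ℤ) (η ξ : ℤ) (u : ℂ) : ℂ :=
  listDet
    ((B1.map (Sum.inl : ι → ι ⊕ (ι ⊕ ℤ)) ++
      B2.map (fun b => (Sum.inr (Sum.inl b) : ι ⊕ (ι ⊕ ℤ))) ++
      R.map (fun r => (Sum.inr (Sum.inr r) : ι ⊕ (ι ⊕ ℤ)))))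
    ((F.map (Sum.inl : ι → ι ⊕ (ℤ ⊕ (ℤ ⊕ ℤ))) ++
      S.map (fun j => (Sum.inr (Sum.inl j) : ι ⊕ (ℤ ⊕ (ℤ ⊕ ℤ)))) ++
      T1.map (fun j => (Sum.inr (Sum.inr (Sum.inl j)) : ι ⊕ (ℤ ⊕ (ℤ ⊕ ℤ)))) ++
      T2.map (fun j => (Sum.inr (Sum.inr (Sum.inr j)) : ι ⊕ (ℤ ⊕ (ℤ ⊕ ℤ))))))
    (fun row col =>
      match row, col with
      | Sum.inl b, Sum.inl f => Qbf b f (u + (ξ : ℂ) * hbar)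
      | Sum.inl b, Sum.inr (Sum.inl j) => Qb b (u + ((ξ + 2 * j - 1 : ℤ) : ℂ) * hbar)
      | Sum.inl b, Sum.inr (Sum.inr (Sum.inl j)) =>
          Qb b (u + ((ξ + 2 * j - 1 : ℤ) : ℂ) * hbar)
      | Sum.inl _, Sum.inr (Sum.inr (Sum.inr _)) => 0
      | Sum.inr (Sum.inl b), Sum.inl f =>
          (-1 : ℂ) ^ η * Qbf b f (u + ((ξ - 2 * η : ℤ) : ℂ) * hbar)
      | Sum.inr (Sum.inl b), Sum.inr (Sum.inl j) =>
          Qb b (u + ((ξ + 2 * j - 1 : ℤ) : ℂ) * hbar)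
      | Sum.inr (Sum.inl _), Sum.inr (Sum.inr (Sum.inl _)) => 0
      | Sum.inr (Sum.inl b), Sum.inr (Sum.inr (Sum.inr j)) =>
          Qb b (u + ((ξ + 2 * j - 1 : ℤ) : ℂ) * hbar)
      | Sum.inr (Sum.inr r), Sum.inl f =>
          (-1 : ℂ) ^ (r - 1) * Qf f (u + ((ξ - 2 * r + 1 : ℤ) : ℂ) * hbar)
      | Sum.inr (Sum.inr _), Sum.inr _ => 0)

/-!
For square matrices, `det B • adj A - det A • adj B = adj B * (B - A) * adj A`. If `B - A` is the
rank-one matrix `g hᵀ`, the last diagonal entry of this identity is a bilinear relation between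
bordered determinants: the entries of `adj B *ᵥ g` and `h ᵥ* adj A` are the determinants of `B` with
a column replaced by `g` and of `A` with a row replaced by `h`. The QQ-relation says precisely that,
up to row and column signs, the matrices of `Δ^{[η;ξ]}` and `Δ^{[η+1;ξ]}` differ by a rank-one
matrix, whose factors are the column labelled `-η ∈ T2` and the row labelled `η + 1 ∈ R`.
-/

section Matrix

open Matrix

variable {R : Type*} [CommRing R]

theorem det_smul_adjugate_sub_det_smul_adjugate {n : Type*} [Fintype n] [DecidableEq n]
    (A B : Matrix n n R) :
    B.det • A.adjugate - A.det • B.adjugate = B.adjugate * (B - A) * A.adjugate := by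
  rw [mul_sub, sub_mul, adjugate_mul, mul_assoc _ A, mul_adjugate, smul_mul_assoc, mul_smul_comm,
    one_mul, mul_one]

theorem vecMul_adjugate_apply {n : Type*} [Fintype n] [DecidableEq n] (A : Matrix n n R)
    (h : n → R) (i : n) : (h ᵥ* A.adjugate) i = (A.updateRow i h).det := by
  rw [← mulVec_transpose, adjugate_transpose, ← cramer_eq_adjugate_mulVec, cramer_transpose_apply]

theorem adjugate_last_last {k : ℕ} (A : Matrix (Fin (k + 1)) (Fin (k + 1)) R) :
    A.adjugate (Fin.last k) (Fin.last k) = (A.submatrix Fin.castSucc Fin.castSucc).det := by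
  simp [adjugate_fin_succ_eq_det_submatrix, ← two_mul, Fin.succAbove_last]

theorem det_submatrix_mul_det_of_eq_add_vecMulVec {k : ℕ}
    {A B : Matrix (Fin (k + 1)) (Fin (k + 1)) R} {g h : Fin (k + 1) → R}
    (hB : B = A + vecMulVec g h) :
    (A.submatrix Fin.castSucc Fin.castSucc).det * B.det =
      A.det * (B.submatrix Fin.castSucc Fin.castSucc).det +
        (B.updateCol (Fin.last k) g).det * (A.updateRow (Fin.last k) h).det := by
  have key := congr_fun₂ (det_smul_adjugate_sub_det_smul_adjugate A B) (Fin.last k) (Fin.last k)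
  rw [sub_eq_of_eq_add' hB, mul_vecMulVec, vecMulVec_mul, vecMulVec_apply, vecMul_adjugate_apply,
    ← cramer_eq_adjugate_mulVec, cramer_apply, Matrix.sub_apply, Matrix.smul_apply,
    Matrix.smul_apply, adjugate_last_last, adjugate_last_last, smul_eq_mul, smul_eq_mul] at key
  linear_combination key

end Matrix

section ListDet

variable {α β : Type*}

theorem exists_eq_ofFn_of_length_eq {C : List α} {D : List β} (h : C.length = D.length) :
    ∃ (k : ℕ) (r : Fin k → α) (c : Fin k → β), C = List.ofFn r ∧ D = List.ofFn c :=
  ⟨C.length, C.get, D.get ∘ Fin.cast h, (List.ofFn_get C).symm,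
    (List.ofFn_get D).symm.trans (List.ofFn_congr h.symm D.get)⟩

theorem ofFn_snoc {k : ℕ} (f : Fin k → α) (x : α) :
    List.ofFn (Fin.snoc f x : Fin (k + 1) → α) = List.ofFn f ++ [x] := by
  rw [List.ofFn_succ']
  simp only [Fin.snoc_castSucc, Fin.snoc_last, List.concat_eq_append]

theorem exists_eq_comp_of_ofFn_perm {k : ℕ} {f g : Fin k → α}
    (h : (List.ofFn f).Perm (List.ofFn g)) : ∃ σ : Equiv.Perm (Fin k), f = g ∘ σ := by
  classical
  have hf : (List.ofFn f).length = k := List.length_ofFn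
  have hg : (List.ofFn g).length = k := List.length_ofFn
  refine ⟨((finCongr hf).symm.trans
    (Equiv.ofBijective h.idxBij ⟨h.idxBij_injective, h.idxBij_surjective⟩)).trans (finCongr hg), ?_⟩
  ext i
  have hi := h.getElem_idxBij_eq_getElem (Fin.cast hf.symm i)
  rw [List.getElem_ofFn, List.getElem_ofFn] at hi
  exact hi.symm

theorem listDet_of_length_ne {C : List α} {D : List β} (h : C.length ≠ D.length)
    (e : α → β → ℂ) : listDet C D e = 0 :=
  dif_neg h

theorem listDet_ofFn {k : ℕ} (r : Fin k → α) (c : Fin k → β) (e : α → β → ℂ) :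
    listDet (List.ofFn r) (List.ofFn c) e = (Matrix.of fun i j => e (r i) (c j)).det := by
  have hk : (List.ofFn r).length = k := List.length_ofFn
  rw [listDet, dif_pos (by simp), ← Matrix.det_submatrix_equiv_self (finCongr hk)]
  congr 1
  ext i j
  simp [Fin.cast]

theorem listDet_transpose (C : List α) (D : List β) (e : α → β → ℂ) :
    listDet C D e = listDet D C (fun y x => e x y) := by
  by_cases hl : C.length = D.length
  · obtain ⟨k, r, c, rfl, rfl⟩ := exists_eq_ofFn_of_length_eq hl
    rw [listDet_ofFn, listDet_ofFn, ← Matrix.det_transpose]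
    rfl
  · rw [listDet_of_length_ne hl, listDet_of_length_ne (Ne.symm hl)]

theorem exists_listDet_eq_of_perm_rows {C C' : List α} (h : C.Perm C') :
    ∃ ε : ℤˣ, ∀ (D : List β) (e : α → β → ℂ), listDet C D e = (ε : ℤ) * listDet C' D e := by
  obtain ⟨k, r, r', rfl, rfl⟩ := exists_eq_ofFn_of_length_eq h.length_eq
  obtain ⟨σ, rfl⟩ := exists_eq_comp_of_ofFn_perm h
  refine ⟨Equiv.Perm.sign σ, fun D e => ?_⟩
  by_cases hl : D.length = k
  · obtain ⟨c, rfl⟩ : ∃ c : Fin k → β, D = List.ofFn c := by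
      subst hl
      exact ⟨D.get, (List.ofFn_get D).symm⟩
    rw [listDet_ofFn, listDet_ofFn, ← Matrix.det_permute]
    rfl
  · rw [listDet_of_length_ne, listDet_of_length_ne, mul_zero] <;> simpa using Ne.symm hl

theorem exists_listDet_eq_of_perm_cols {D D' : List β} (h : D.Perm D') :
    ∃ ε : ℤˣ, ∀ (C : List α) (e : α → β → ℂ), listDet C D e = (ε : ℤ) * listDet C D' e := by
  obtain ⟨ε, hε⟩ := exists_listDet_eq_of_perm_rows (β := α) h
  refine ⟨ε, fun C e => ?_⟩
  rw [listDet_transpose C D, listDet_transpose C D', hε]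

theorem listDet_mul_mul (C : List α) (D : List β) (s : α → ℂ) (t : β → ℂ) (e : α → β → ℂ) :
    listDet C D (fun x y => s x * t y * e x y) =
      (C.map s).prod * (D.map t).prod * listDet C D e := by
  by_cases hl : C.length = D.length
  · obtain ⟨k, r, c, rfl, rfl⟩ := exists_eq_ofFn_of_length_eq hl
    rw [List.map_ofFn, List.map_ofFn, List.prod_ofFn, List.prod_ofFn, listDet_ofFn, listDet_ofFn,
      mul_assoc, ← Matrix.det_mul_row, ← Matrix.det_mul_column]
    simp only [Matrix.of_apply, Function.comp_apply, mul_assoc]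
  · rw [listDet_of_length_ne hl, listDet_of_length_ne hl, mul_zero]

theorem listDet_mul_listDet_of_eq_add_mul {C : List α} {D : List β} (hCD : C.length = D.length)
    {x y : α} {z w : β} {M E : α → β → ℂ}
    (hE : ∀ r ∈ C ++ [x], ∀ c ∈ D ++ [z], E r c = M r c + E r w * M y c) :
    listDet C D M * listDet (C ++ [x]) (D ++ [z]) E =
      listDet (C ++ [x]) (D ++ [z]) M * listDet C D E +
        listDet (C ++ [x]) (D ++ [w]) E * listDet (C ++ [y]) (D ++ [z]) M := by
  obtain ⟨k, r, c, rfl, rfl⟩ := exists_eq_ofFn_of_length_eq hCD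
  simp only [← ofFn_snoc, List.forall_mem_ofFn_iff] at hE ⊢
  set r' : Fin (k + 1) → α := Fin.snoc r x with hr'
  set c' : Fin (k + 1) → β := Fin.snoc c z with hc'
  have key := det_submatrix_mul_det_of_eq_add_vecMulVec
    (A := Matrix.of fun i j => M (r' i) (c' j)) (B := Matrix.of fun i j => E (r' i) (c' j))
    (g := fun i => E (r' i) w) (h := fun j => M y (c' j)) (by ext i j; exact hE i j)
  have hw : (Matrix.of fun i j => E (r' i) (c' j)).updateCol (Fin.last k) (fun i => E (r' i) w) =
      Matrix.of fun i j => E (r' i) ((Fin.snoc c w : Fin (k + 1) → β) j) := by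
    ext i j
    refine Fin.lastCases ?_ (fun j => ?_) j <;> simp [hc']
  have hy : (Matrix.of fun i j => M (r' i) (c' j)).updateRow (Fin.last k) (fun j => M y (c' j)) =
      Matrix.of fun i j => M ((Fin.snoc r y : Fin (k + 1) → α) i) (c' j) := by
    ext i j
    refine Fin.lastCases ?_ (fun i => ?_) i <;> simp [hr']
  rw [hw, hy] at key
  simpa only [listDet_ofFn, Matrix.submatrix, Matrix.of_apply, hr', hc', Fin.snoc_castSucc]
    using key

end ListDet

section Segment

-- In `seg` the list `List.range _` itself is coerced to `List ℤ`, through the list monad.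
theorem seg_eq_map_range (a b : ℤ) :
    seg a b = (List.range (b - a + 1).toNat).map (fun k : ℕ => a + (k : ℤ)) := by
  simp only [seg, List.bind_eq_flatMap, List.pure_def, ← List.map_eq_flatMap, List.map_map,
    Function.comp_def]

theorem length_seg (a b : ℤ) : (seg a b).length = (b - a + 1).toNat := by
  simp [seg_eq_map_range]

theorem seg_eq_cons {a b : ℤ} (h : a ≤ b) : seg a b = a :: seg (a + 1) b := by
  have hlen : (b - a + 1).toNat = (b - (a + 1) + 1).toNat + 1 := by omega
  rw [seg_eq_map_range, seg_eq_map_range, hlen, List.range_succ_eq_map, List.map_cons,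
    List.map_map]
  simp [Function.comp_def, add_assoc, add_comm (1 : ℤ)]

theorem seg_add_one_eq_append {a b : ℤ} (h : a ≤ b + 1) : seg a (b + 1) = seg a b ++ [b + 1] := by
  have hlen : (b + 1 - a + 1).toNat = (b - a + 1).toNat + 1 := by omega
  have hlast : a + ((b - a + 1).toNat : ℤ) = b + 1 := by omega
  rw [seg_eq_map_range, seg_eq_map_range, hlen, List.range_succ, List.map_append,
    List.map_singleton, hlast]

end Segment

section Delta

variable {ι : Type*}

/-- The row labels `B1 ⊔ B2 ⊔ R` of `DeltaCF`. -/
def rowLabels (B1 B2 : List ι) (R : List ℤ) : List (ι ⊕ (ι ⊕ ℤ)) :=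
  B1.map .inl ++ B2.map (fun b => .inr (.inl b)) ++ R.map (fun r => .inr (.inr r))

/-- The column labels `F ⊔ T1 ⊔ T2` of `DeltaCF` when `S` is empty. -/
def colLabels (F : List ι) (T1 T2 : List ℤ) : List (ι ⊕ (ℤ ⊕ (ℤ ⊕ ℤ))) :=
  F.map .inl ++ T1.map (fun j => .inr (.inr (.inl j))) ++
    T2.map (fun j => .inr (.inr (.inr j)))

/-- The matrix entries of `DeltaCF`, a named copy of the `match` in its definition. -/
noncomputable def deltaEntry (hbar : ℂ) (Qb Qf : ι → ℂ → ℂ) (Qbf : ι → ι → ℂ → ℂ) (η ξ : ℤ)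
    (u : ℂ) : ι ⊕ (ι ⊕ ℤ) → ι ⊕ (ℤ ⊕ (ℤ ⊕ ℤ)) → ℂ
  | .inl b, .inl f => Qbf b f (u + (ξ : ℂ) * hbar)
  | .inl b, .inr (.inl j) => Qb b (u + ((ξ + 2 * j - 1 : ℤ) : ℂ) * hbar)
  | .inl b, .inr (.inr (.inl j)) => Qb b (u + ((ξ + 2 * j - 1 : ℤ) : ℂ) * hbar)
  | .inl _, .inr (.inr (.inr _)) => 0
  | .inr (.inl b), .inl f => (-1 : ℂ) ^ η * Qbf b f (u + ((ξ - 2 * η : ℤ) : ℂ) * hbar)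
  | .inr (.inl b), .inr (.inl j) => Qb b (u + ((ξ + 2 * j - 1 : ℤ) : ℂ) * hbar)
  | .inr (.inl _), .inr (.inr (.inl _)) => 0
  | .inr (.inl b), .inr (.inr (.inr j)) => Qb b (u + ((ξ + 2 * j - 1 : ℤ) : ℂ) * hbar)
  | .inr (.inr r), .inl f => (-1 : ℂ) ^ (r - 1) * Qf f (u + ((ξ - 2 * r + 1 : ℤ) : ℂ) * hbar)
  | .inr (.inr _), .inr _ => 0

/-- The sign of a row in the comparison of `η` with `η + 1`: `-1` exactly on the `B2` rows. -/
def rowSign : ι ⊕ (ι ⊕ ℤ) → ℂ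
  | .inr (.inl _) => -1
  | _ => 1

/-- The sign of a column in the comparison of `η` with `η + 1`: `-1` exactly on the `T2` columns. -/
def colSign : ι ⊕ (ℤ ⊕ (ℤ ⊕ ℤ)) → ℂ
  | .inr (.inr (.inr _)) => -1
  | _ => 1

theorem rowLabels_append_singleton (B1 B2 : List ι) (R : List ℤ) (r : ℤ) :
    rowLabels B1 B2 (R ++ [r]) = rowLabels B1 B2 R ++ [.inr (.inr r)] := by
  simp [rowLabels]

theorem colLabels_append_singleton (F : List ι) (T1 T2 : List ℤ) (j : ℤ) :
    colLabels F T1 (T2 ++ [j]) = colLabels F T1 T2 ++ [.inr (.inr (.inr j))] := by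
  simp [colLabels]

theorem rowLabels_cons_perm (B1 B2 : List ι) (R : List ℤ) (r : ℤ) :
    (rowLabels B1 B2 (r :: R)).Perm (rowLabels B1 B2 R ++ [.inr (.inr r)]) := by
  rw [← rowLabels_append_singleton]
  exact ((List.perm_append_singleton r R).symm.map _).append_left _

theorem colLabels_cons_perm (F : List ι) (T1 T2 : List ℤ) (j : ℤ) :
    (colLabels F T1 (j :: T2)).Perm (colLabels F T1 T2 ++ [.inr (.inr (.inr j))]) := by
  rw [← colLabels_append_singleton]
  exact ((List.perm_append_singleton j T2).symm.map _).append_left _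

variable {hbar : ℂ} {Qb Qf : ι → ℂ → ℂ} {Qbf : ι → ι → ℂ → ℂ} {B1 B2 F : List ι}

theorem DeltaCF_eq_listDet (R T1 T2 : List ℤ) (η ξ : ℤ) (u : ℂ) :
    DeltaCF hbar Qb Qf Qbf B1 B2 F R [] T1 T2 η ξ u =
      listDet (rowLabels B1 B2 R) (colLabels F T1 T2) (deltaEntry hbar Qb Qf Qbf η ξ u) := by
  rw [colLabels, ← List.append_nil (F.map _)]
  rfl

theorem DeltaCF_eq_pow_mul_listDet_sign (R T1 T2 : List ℤ) (η ξ : ℤ) (u : ℂ) :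
    DeltaCF hbar Qb Qf Qbf B1 B2 F R [] T1 T2 η ξ u =
      (-1) ^ (B2.length + T2.length) * listDet (rowLabels B1 B2 R) (colLabels F T1 T2)
        (fun r c => rowSign r * colSign c * deltaEntry hbar Qb Qf Qbf η ξ u r c) := by
  have hrow : ((rowLabels B1 B2 R).map rowSign).prod = (-1) ^ B2.length := by
    simp [rowLabels, rowSign, Function.comp_def]
  have hcol : ((colLabels F T1 T2).map colSign).prod = (-1) ^ T2.length := by
    simp [colLabels, colSign, Function.comp_def]
  rw [listDet_mul_mul, hrow, hcol, ← pow_add, ← mul_assoc, ← mul_pow, DeltaCF_eq_listDet]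
  norm_num

theorem deltaEntry_eq_add_mul
    (hQQ : ∀ b ∈ B2, ∀ f ∈ F, ∀ u, Qb b u * Qf f u = Qbf b f (u + hbar) - Qbf b f (u - hbar))
    {R T1 T2 : List ℤ} (η ξ : ℤ) (u : ℂ) {row : ι ⊕ (ι ⊕ ℤ)} {col : ι ⊕ (ℤ ⊕ (ℤ ⊕ ℤ))}
    (hrow : row ∈ rowLabels B1 B2 R) (hcol : col ∈ colLabels F T1 T2) :
    deltaEntry hbar Qb Qf Qbf η ξ u row col =
      rowSign row * colSign col * deltaEntry hbar Qb Qf Qbf (η + 1) ξ u row col +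
        deltaEntry hbar Qb Qf Qbf η ξ u row (.inr (.inr (.inr (-η)))) *
          (rowSign (.inr (.inr (η + 1)) : ι ⊕ (ι ⊕ ℤ)) * colSign col *
            deltaEntry hbar Qb Qf Qbf (η + 1) ξ u (.inr (.inr (η + 1))) col) := by
  rcases row with b | b | r <;> rcases col with f | j | j | j
  case inr.inl.inl =>
    have hb : b ∈ B2 := by simpa [rowLabels] using hrow
    have hf : f ∈ F := by simpa [colLabels] using hcol
    have hQ := hQQ b hb f hf (u + ((ξ - 2 * η - 1 : ℤ) : ℂ) * hbar)
    have shift_up : u + ((ξ - 2 * η - 1 : ℤ) : ℂ) * hbar + hbar =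
        u + ((ξ - 2 * η : ℤ) : ℂ) * hbar := by push_cast; ring
    have shift_down : u + ((ξ - 2 * η - 1 : ℤ) : ℂ) * hbar - hbar =
        u + ((ξ - 2 * (η + 1) : ℤ) : ℂ) * hbar := by push_cast; ring
    have arg_b : ξ + 2 * -η - 1 = ξ - 2 * η - 1 := by ring
    have arg_f : ξ - 2 * (η + 1) + 1 = ξ - 2 * η - 1 := by ring
    have sign_succ : (-1 : ℂ) ^ (η + 1) = -(-1) ^ η := by
      rw [zpow_add_one₀ (by norm_num), mul_neg_one]
    rw [shift_up, shift_down] at hQ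
    simp only [deltaEntry, rowSign, colSign, arg_b, arg_f, sign_succ, add_sub_cancel_right]
    linear_combination -(-1) ^ η * hQ
  case inr.inl.inr.inl => simp [colLabels] at hcol
  case inl.inr.inl => simp [colLabels] at hcol
  all_goals simp [deltaEntry, rowSign, colSign]

theorem DeltaCF_mul_DeltaCF
    (hQQ : ∀ b ∈ B2, ∀ f ∈ F, ∀ u, Qb b u * Qf f u = Qbf b f (u + hbar) - Qbf b f (u - hbar))
    {R T1 T2 : List ℤ}
    (hlen : B1.length + B2.length + R.length = F.length + T1.length + T2.length)
    (p q η ξ : ℤ) (u : ℂ) :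
    DeltaCF hbar Qb Qf Qbf B1 B2 F (R ++ [η + 1]) [] T1 (q :: T2) (η + 1) ξ u *
        DeltaCF hbar Qb Qf Qbf B1 B2 F (p :: R) [] T1 (T2 ++ [-η]) η ξ u =
      -(DeltaCF hbar Qb Qf Qbf B1 B2 F (p :: R) [] T1 (q :: T2) η ξ u *
          DeltaCF hbar Qb Qf Qbf B1 B2 F R [] T1 T2 (η + 1) ξ u) -
        DeltaCF hbar Qb Qf Qbf B1 B2 F R [] T1 T2 η ξ u *
          DeltaCF hbar Qb Qf Qbf B1 B2 F (p :: R) [] T1 (q :: T2) (η + 1) ξ u := by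
  -- The signs of these two reorderings need not be known: each occurs once in every product.
  obtain ⟨ε, hε⟩ := exists_listDet_eq_of_perm_rows (β := ι ⊕ (ℤ ⊕ (ℤ ⊕ ℤ)))
    (rowLabels_cons_perm B1 B2 R p)
  obtain ⟨δ, hδ⟩ := exists_listDet_eq_of_perm_cols (α := ι ⊕ (ι ⊕ ℤ))
    (colLabels_cons_perm F T1 T2 q)
  have key := listDet_mul_listDet_of_eq_add_mul (C := rowLabels B1 B2 R) (D := colLabels F T1 T2)
    (x := .inr (.inr p)) (y := .inr (.inr (η + 1))) (z := .inr (.inr (.inr q)))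
    (w := .inr (.inr (.inr (-η)))) (E := deltaEntry hbar Qb Qf Qbf η ξ u)
    (M := fun r c => rowSign r * colSign c * deltaEntry hbar Qb Qf Qbf (η + 1) ξ u r c)
    (by simpa [rowLabels, colLabels, add_assoc] using hlen)
    (fun r hr c hc => deltaEntry_eq_add_mul hQQ η ξ u
      (rowLabels_append_singleton B1 B2 R p ▸ hr) (colLabels_append_singleton F T1 T2 q ▸ hc))
  simp only [DeltaCF_eq_pow_mul_listDet_sign _ _ _ (η + 1), DeltaCF_eq_listDet _ _ _ η, hε, hδ,
    rowLabels_append_singleton, colLabels_append_singleton, List.length_cons]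
  linear_combination ((-1) ^ (B2.length + T2.length) * (ε : ℤ) * (δ : ℤ)) * key

end Delta

theorem bilinear_case_v_general {ι : Type*} {hbar : ℂ} {Qb Qf : ι → ℂ → ℂ}
    {Qbf : ι → ι → ℂ → ℂ} {B1 B2 F : List ι}
    (hQQ : ∀ b ∈ B2, ∀ f ∈ F, ∀ u, Qb b u * Qf f u = Qbf b f (u + hbar) - Qbf b f (u - hbar))
    (T1 : List ℤ) {p q η : ℤ} (ξ : ℤ) (hp : p ≤ η) (hq : q + 1 ≤ -η)
    (hlen : B1.length + B2.length + (η - p) = F.length + T1.length + (-η - 1 - q)) (u : ℂ) :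
    DeltaCF hbar Qb Qf Qbf B1 B2 F (seg (p + 1) (η + 1)) [] T1 (seg q (-η - 1)) (η + 1) ξ u *
        DeltaCF hbar Qb Qf Qbf B1 B2 F (seg p η) [] T1 (seg (q + 1) (-η)) η ξ u =
      -(DeltaCF hbar Qb Qf Qbf B1 B2 F (seg p η) [] T1 (seg q (-η - 1)) η ξ u *
          DeltaCF hbar Qb Qf Qbf B1 B2 F (seg (p + 1) η) [] T1 (seg (q + 1) (-η - 1))
            (η + 1) ξ u) -
        DeltaCF hbar Qb Qf Qbf B1 B2 F (seg (p + 1) η) [] T1 (seg (q + 1) (-η - 1)) η ξ u *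
          DeltaCF hbar Qb Qf Qbf B1 B2 F (seg p η) [] T1 (seg q (-η - 1)) (η + 1) ξ u := by
  have hT : seg (q + 1) (-η) = seg (q + 1) (-η - 1) ++ [-η] := by
    simpa using seg_add_one_eq_append (a := q + 1) (b := -η - 1) (by omega)
  rw [seg_add_one_eq_append (by omega : p + 1 ≤ η + 1), seg_eq_cons hp,
    seg_eq_cons (by omega : q ≤ -η - 1), hT]
  exact DeltaCF_mul_DeltaCF hQQ (by simp only [length_seg]; omega) p q η ξ u

/-- **Bilinear determinant identity on the line `a = -s + η2` (case (v) of the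
Hirota proof).** -/
theorem bilinear_case_v {ι : Type*} (hbar : ℂ) (hbar_ne : hbar ≠ 0)
    (Qb Qf : ι → ℂ → ℂ) (Qbf : ι → ι → ℂ → ℂ)
    (B1 B2 F1 F2 : List ι) (hnd : (B1 ++ B2 ++ F1 ++ F2).Nodup)
    (hQQ : ∀ b ∈ B1 ++ B2, ∀ f ∈ F1 ++ F2, ∀ u : ℂ,
      Qb b u * Qf f u = Qbf b f (u + hbar) - Qbf b f (u - hbar))
    (hm2 : 1 ≤ B2.length) (hn : 1 ≤ F1.length + F2.length)
    (s : ℤ)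
    (hs1 : -(F2.length : ℤ) ≤ s)
    (hs2 : s ≤ -((B1.length : ℤ) - F1.length) - 1)
    (hs3 : s ≤ ((B2.length : ℤ) - F2.length) - 1) :
    ∀ u : ℂ,
      DeltaCF hbar Qb Qf Qbf B1 B2 (F1 ++ F2)
          (seg (s + ((B1.length : ℤ) - F1.length) + 2) 1) [] []
          (seg (s - ((B2.length : ℤ) - F2.length)) (-1)) 1 2 u *
        DeltaCF hbar Qb Qf Qbf B1 B2 (F1 ++ F2)
          (seg (s + ((B1.length : ℤ) - F1.length) + 1) 0) [] []
          (seg (s - ((B2.length : ℤ) - F2.length) + 1) 0) 0 2 u =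
      -(DeltaCF hbar Qb Qf Qbf B1 B2 (F1 ++ F2)
            (seg (s + ((B1.length : ℤ) - F1.length) + 1) 0) [] []
            (seg (s - ((B2.length : ℤ) - F2.length)) (-1)) 0 2 u *
          DeltaCF hbar Qb Qf Qbf B1 B2 (F1 ++ F2)
            (seg (s + ((B1.length : ℤ) - F1.length) + 2) 0) [] []
            (seg (s - ((B2.length : ℤ) - F2.length) + 1) (-1)) 1 2 u) -
        DeltaCF hbar Qb Qf Qbf B1 B2 (F1 ++ F2)
            (seg (s + ((B1.length : ℤ) - F1.length) + 2) 0) [] []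
            (seg (s - ((B2.length : ℤ) - F2.length) + 1) (-1)) 0 2 u *
          DeltaCF hbar Qb Qf Qbf B1 B2 (F1 ++ F2)
            (seg (s + ((B1.length : ℤ) - F1.length) + 1) 0) [] []
            (seg (s - ((B2.length : ℤ) - F2.length)) (-1)) 1 2 u := by
  intro u
  have key := bilinear_case_v_general (B1 := B1) (fun b hb => hQQ b (List.mem_append_right B1 hb))
    [] (p := s + (B1.length - F1.length) + 1) (q := s - (B2.length - F2.length)) (η := 0) 2
    (by omega) (by omega) (by simp only [List.length_append, List.length_nil]; omega) u
  simpa [add_assoc, one_add_one_eq_two] using key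

end Stmt13
end

section
/- Removing the twist turns the twisted QQ-relations into coefficient-free QQ-relations. For an ordered tuple I of distinct elements of ℐ set a_I := ∏_{j≺k in I} ((z_j−z_k)/(w_j·w_k))^{p_j·p_k} (empty product = 1, and a_I = 1 for |I| ≤ 1) and define 𝒬_I := a_I · (∏_{i∈I} f_i) · Q_{I}, where Q is evaluated on the underlying set of I. Then for every ordered tuple I and distinct i, j not occurring in I, writing (I,i), (I,j), (I,i,j) for the tuples obtained by appending i, respectively j, respectively i then j, at the end of I: if p_i = p_j then 𝒬_I·𝒬_{(I,i,j)} = 𝒬_{(I,i)}^{[p_i]}·𝒬_{(I,j)}^{[−p_i]} − 𝒬_{(I,i)}^{[−p_i]}·𝒬_{(I,j)}^{[p_i]}, and if p_i = −p_j then 𝒬_{(I,i)}·𝒬_{(I,j)} = 𝒬_I^{[−p_i]}·𝒬_{(I,i,j)}^{[p_i]} − 𝒬_I^{[p_i]}·𝒬_{(I,i,j)}^{[−p_i]}. -/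
open scoped BigOperators

namespace Stmt15

/-- The twist factor `a_I = ∏_{j≺k in I} ((z_j−z_k)/(w_j·w_k))^{p_j·p_k}`. -/
noncomputable def twistFactor {ι : Type*} (z w : ι → ℂ) (p : ι → ℤ) (I : List ι) : ℂ :=
  ∏ i : Fin I.length, ∏ j : Fin I.length,
    if i < j then ((z (I.get i) - z (I.get j)) / (w (I.get i) * w (I.get j))) ^
      (p (I.get i) * p (I.get j)) else 1

/-- The coefficient-free (untwisted) Q-function
`𝒬_I(u) = a_I · (∏_{i∈I} f_i(u)) · Q_I(u)`. -/
noncomputable def QCF {ι : Type*} [DecidableEq ι] (z w : ι → ℂ) (p : ι → ℤ)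
    (f : ι → ℂ → ℂ) (Q : Finset ι → ℂ → ℂ) (I : List ι) (u : ℂ) : ℂ :=
  twistFactor z w p I * (I.map (fun i => f i u)).prod * Q I.toFinset u

/-!
The prefactor `g_I(u) = a_I ∏_{i ∈ I} f_i(u)` absorbs the coefficients `z_i - z_j`, `z_i`, `z_j` of
the twisted relations. It is quasi-periodic, `g_I(u + kħ) = W_I ^ k g_I(u)` with
`W_I = ∏_{i ∈ I} w_i ^ p_i`, and the terms of `a_{(I,i,j)}` involving only one of `i`, `j` cancel in
`g_I g_{(I,i,j)} / (g_{(I,i)} g_{(I,j)})`, which leaves `((z_i - z_j) / (w_i w_j)) ^ (p_i p_j)`.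
Hence, for either sign of `p_i p_j`, the prefactors of the three terms are in the ratio
`(z_i - z_j) / (w_i w_j) : w_i / w_j : w_j / w_i = z_i - z_j : z_i : z_j`.
-/

section TwistFactor

variable {ι : Type*} (z w : ι → ℂ) (p : ι → ℤ)

/-- The contribution `((z_j − z_k)/(w_j·w_k))^{p_j·p_k}` of one pair `j ≺ k` to the twist factor. -/
noncomputable def pairTwist (j k : ι) : ℂ :=
  ((z j - z k) / (w j * w k)) ^ (p j * p k)

theorem twistFactor_cons (i : ι) (I : List ι) :
    twistFactor z w p (i :: I) = (I.map (pairTwist z w p i)).prod * twistFactor z w p I := by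
  rw [← Fin.prod_univ_fun_getElem]
  simp [twistFactor, pairTwist, Fin.prod_univ_succ]

theorem twistFactor_append_singleton (I : List ι) (i : ι) :
    twistFactor z w p (I ++ [i]) =
      twistFactor z w p I * (I.map (pairTwist z w p · i)).prod := by
  induction I with
  | nil => simp [twistFactor]
  | cons k I ih =>
    simp only [List.cons_append, twistFactor_cons, ih, List.map_append, List.prod_append,
      List.map_cons, List.prod_cons, List.map_nil, List.prod_nil]
    ring

theorem twistFactor_mul_twistFactor_append_pair (I : List ι) (i j : ι) :
    twistFactor z w p I * twistFactor z w p (I ++ [i, j]) =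
      pairTwist z w p i j * (twistFactor z w p (I ++ [i]) * twistFactor z w p (I ++ [j])) := by
  rw [List.append_cons I i [j]]
  simp only [twistFactor_append_singleton, List.map_append, List.prod_append, List.map_cons,
    List.map_nil, List.prod_singleton]
  ring

end TwistFactor

section Gauge

variable {ι : Type*} {hbar : ℂ} {z w : ι → ℂ} {p : ι → ℤ} {f : ι → ℂ → ℂ}

/-- The prefactor `g_I(u) = a_I · ∏_{i∈I} f_i(u)` relating `𝒬_I` to `Q_I`. -/
noncomputable def gauge (z w : ι → ℂ) (p : ι → ℤ) (f : ι → ℂ → ℂ) (I : List ι) (u : ℂ) : ℂ :=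
  twistFactor z w p I * (I.map (f · u)).prod

/-- The multiplier `W_I = ∏_{i∈I} w_i^{p_i}` by which `g_I` changes under a shift by `ħ`. -/
noncomputable def multiplier (w : ι → ℂ) (p : ι → ℤ) (I : List ι) : ℂ :=
  (I.map fun i => w i ^ p i).prod

/-- Each `f_i` is quasi-periodic with period `ħ` and multiplier `w_i^{p_i}`. -/
def IsQuasiPeriodic (hbar : ℂ) (w : ι → ℂ) (p : ι → ℤ) (f : ι → ℂ → ℂ) : Prop :=
  ∀ i : ι, ∀ k : ℤ, ∀ u : ℂ, f i (u + (k : ℂ) * hbar) = w i ^ (p i * k) * f i u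

theorem multiplier_append_singleton (I : List ι) (i : ι) :
    multiplier w p (I ++ [i]) = multiplier w p I * w i ^ p i := by
  simp [multiplier]

theorem multiplier_append_pair (I : List ι) (i j : ι) :
    multiplier w p (I ++ [i, j]) = multiplier w p I * (w i ^ p i * w j ^ p j) := by
  simp [multiplier]

theorem multiplier_ne_zero (hw : ∀ i, w i ≠ 0) (I : List ι) : multiplier w p I ≠ 0 := by
  simp [multiplier, List.prod_eq_zero_iff, zpow_ne_zero, hw]

theorem gauge_mul_gauge_append_pair (I : List ι) (i j : ι) (u : ℂ) :
    gauge z w p f I u * gauge z w p f (I ++ [i, j]) u =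
      pairTwist z w p i j * (gauge z w p f (I ++ [i]) u * gauge z w p f (I ++ [j]) u) := by
  simp only [gauge, List.map_append, List.prod_append, List.map_cons, List.prod_cons,
    List.map_nil, List.prod_nil]
  linear_combination (I.map (f · u)).prod ^ 2 * f i u * f j u *
    twistFactor_mul_twistFactor_append_pair z w p I i j

theorem gauge_add_int_mul (hf : IsQuasiPeriodic hbar w p f) (I : List ι) (k : ℤ) (u : ℂ) :
    gauge z w p f I (u + k * hbar) = multiplier w p I ^ k * gauge z w p f I u := by
  have hW : multiplier w p I ^ k = (I.map fun i => w i ^ (p i * k)).prod := by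
    simpa [multiplier, Function.comp_def, zpow_mul] using
      map_list_prod (zpowGroupHom k : ℂ →* ℂ) (I.map fun i => w i ^ p i)
  simp only [gauge, hf _ k u, List.prod_map_mul, hW]
  ring

theorem gauge_add_mul_gauge_sub (hf : IsQuasiPeriodic hbar w p f) (A B : List ι) (k : ℤ) (u : ℂ) :
    gauge z w p f A (u + k * hbar) * gauge z w p f B (u - k * hbar) =
      (multiplier w p A / multiplier w p B) ^ k * (gauge z w p f A u * gauge z w p f B u) := by
  have hsub : u - k * hbar = u + ((-k : ℤ) : ℂ) * hbar := by push_cast; ring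
  rw [hsub, gauge_add_int_mul hf, gauge_add_int_mul hf, div_zpow, zpow_neg]
  ring

end Gauge

section QQ

variable {ι : Type*} [DecidableEq ι] {hbar : ℂ} {z w : ι → ℂ} {p : ι → ℤ} {f : ι → ℂ → ℂ}
  {Q : Finset ι → ℂ → ℂ}

theorem QCF_eq_gauge_mul (I : List ι) (u : ℂ) :
    QCF z w p f Q I u = gauge z w p f I u * Q I.toFinset u :=
  rfl

theorem toFinset_append_singleton (I : List ι) (i : ι) :
    (I ++ [i]).toFinset = insert i I.toFinset := by
  ext; simp

theorem toFinset_append_pair (I : List ι) (i j : ι) :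
    (I ++ [i, j]).toFinset = insert i (insert j I.toFinset) := by
  ext; simp

/- The tuples `(A, B, C, D)` are `((I,i), (I,j), I, (I,i,j))` when `p_i = p_j` and
`((I,i,j), I, (I,i), (I,j))` when `p_i = -p_j`. -/
theorem QCF_mul_QCF_of_twisted (hf : IsQuasiPeriodic hbar w p f) {i j : ι}
    (hwi : w i ≠ 0) (hwj : w j ≠ 0) (hzi : w i ^ 2 = z i) (hzj : w j ^ 2 = z j)
    {A B C D : List ι} {k : ℤ} {u : ℂ}
    (hW : (multiplier w p A / multiplier w p B) ^ k = w i / w j)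
    (hgauge : gauge z w p f C u * gauge z w p f D u =
      (z i - z j) / (w i * w j) * (gauge z w p f A u * gauge z w p f B u))
    (hQ : (z i - z j) * (Q C.toFinset u * Q D.toFinset u) =
      z i * Q A.toFinset (u + k * hbar) * Q B.toFinset (u - k * hbar) -
        z j * Q A.toFinset (u - k * hbar) * Q B.toFinset (u + k * hbar)) :
    QCF z w p f Q C u * QCF z w p f Q D u =
      QCF z w p f Q A (u + k * hbar) * QCF z w p f Q B (u - k * hbar) -
        QCF z w p f Q A (u - k * hbar) * QCF z w p f Q B (u + k * hbar) := by
  set c := gauge z w p f A u * gauge z w p f B u / (w i * w j) with hc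
  have hCD : gauge z w p f C u * gauge z w p f D u = (z i - z j) * c := by
    rw [hgauge, hc]; ring
  have hAB : gauge z w p f A (u + k * hbar) * gauge z w p f B (u - k * hbar) = z i * c := by
    rw [gauge_add_mul_gauge_sub hf, hW, hc, ← hzi]; field_simp
  have hBA : gauge z w p f B (u + k * hbar) * gauge z w p f A (u - k * hbar) = z j * c := by
    rw [gauge_add_mul_gauge_sub hf, ← inv_div, inv_zpow, hW, hc, ← hzj]; field_simp
  simp only [QCF_eq_gauge_mul]
  linear_combination c * hQ + Q C.toFinset u * Q D.toFinset u * hCD -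
    Q A.toFinset (u + k * hbar) * Q B.toFinset (u - k * hbar) * hAB +
    Q A.toFinset (u - k * hbar) * Q B.toFinset (u + k * hbar) * hBA

theorem QCF_mul_QCF_append_pair_of_eq (hf : IsQuasiPeriodic hbar w p f)
    (hw0 : ∀ i, w i ≠ 0) (hw : ∀ i, w i ^ 2 = z i)
    {I : List ι} {i j : ι} (hpi : p i * p i = 1) (hpij : p i = p j) {u : ℂ}
    (hQ : (z i - z j) * (Q I.toFinset u * Q (insert i (insert j I.toFinset)) u) =
      z i * Q (insert i I.toFinset) (u + p i * hbar) * Q (insert j I.toFinset) (u - p i * hbar) -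
        z j * Q (insert i I.toFinset) (u - p i * hbar) *
          Q (insert j I.toFinset) (u + p i * hbar)) :
    QCF z w p f Q I u * QCF z w p f Q (I ++ [i, j]) u =
      QCF z w p f Q (I ++ [i]) (u + p i * hbar) * QCF z w p f Q (I ++ [j]) (u - p i * hbar) -
        QCF z w p f Q (I ++ [i]) (u - p i * hbar) * QCF z w p f Q (I ++ [j]) (u + p i * hbar) := by
  refine QCF_mul_QCF_of_twisted hf (hw0 i) (hw0 j) (hw i) (hw j) ?_ ?_ ?_
  · rw [multiplier_append_singleton, multiplier_append_singleton,
      mul_div_mul_left _ _ (multiplier_ne_zero hw0 I), ← hpij, ← div_zpow, ← zpow_mul, hpi,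
      zpow_one]
  · rw [gauge_mul_gauge_append_pair, pairTwist, ← hpij, hpi, zpow_one]
  · simpa only [toFinset_append_singleton, toFinset_append_pair] using hQ

theorem QCF_append_singleton_mul_of_eq_neg (hf : IsQuasiPeriodic hbar w p f)
    (hw0 : ∀ i, w i ≠ 0) (hw : ∀ i, w i ^ 2 = z i)
    {I : List ι} {i j : ι} (hzij : z i ≠ z j) (hpi : p i * p i = 1) (hpij : p i = -p j) {u : ℂ}
    (hQ : (z i - z j) * (Q (insert i I.toFinset) u * Q (insert j I.toFinset) u) =
      z i * Q I.toFinset (u - p i * hbar) * Q (insert i (insert j I.toFinset)) (u + p i * hbar) -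
        z j * Q I.toFinset (u + p i * hbar) *
          Q (insert i (insert j I.toFinset)) (u - p i * hbar)) :
    QCF z w p f Q (I ++ [i]) u * QCF z w p f Q (I ++ [j]) u =
      QCF z w p f Q I (u - p i * hbar) * QCF z w p f Q (I ++ [i, j]) (u + p i * hbar) -
        QCF z w p f Q I (u + p i * hbar) * QCF z w p f Q (I ++ [i, j]) (u - p i * hbar) := by
  have hpj : p j = -p i := by rw [hpij, neg_neg]
  rw [mul_comm (QCF z w p f Q I _), mul_comm (QCF z w p f Q I _)]
  refine QCF_mul_QCF_of_twisted hf (hw0 i) (hw0 j) (hw i) (hw j) ?_ ?_ ?_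
  · rw [multiplier_append_pair, mul_div_cancel_left₀ _ (multiplier_ne_zero hw0 I), hpj, zpow_neg,
      ← div_eq_mul_inv, ← div_zpow, ← zpow_mul, hpi, zpow_one]
  · have hne : (z i - z j) / (w i * w j) ≠ 0 :=
      div_ne_zero (sub_ne_zero.mpr hzij) (mul_ne_zero (hw0 i) (hw0 j))
    rw [mul_comm (gauge z w p f (I ++ [i, j]) u), gauge_mul_gauge_append_pair, pairTwist, hpj,
      mul_neg, hpi, zpow_neg_one, mul_inv_cancel_left₀ hne]
  · rw [toFinset_append_singleton, toFinset_append_singleton, toFinset_append_pair, hQ]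
    ring

theorem untwisted_QQ_general (hp : ∀ i, p i = 1 ∨ p i = -1)
    (hz0 : ∀ i, z i ≠ 0) (hzd : Function.Injective z) (hw : ∀ i, w i ^ 2 = z i)
    (hf : IsQuasiPeriodic hbar w p f)
    (hQQ1 : ∀ I : Finset ι, ∀ i ∉ I, ∀ j ∉ I, i ≠ j → p i = p j → ∀ u : ℂ,
      (z i - z j) * (Q I u * Q (insert i (insert j I)) u) =
        z i * Q (insert i I) (u + p i * hbar) * Q (insert j I) (u - p i * hbar) -
          z j * Q (insert i I) (u - p i * hbar) * Q (insert j I) (u + p i * hbar))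
    (hQQ2 : ∀ I : Finset ι, ∀ i ∉ I, ∀ j ∉ I, i ≠ j → p i = -p j → ∀ u : ℂ,
      (z i - z j) * (Q (insert i I) u * Q (insert j I) u) =
        z i * Q I (u - p i * hbar) * Q (insert i (insert j I)) (u + p i * hbar) -
          z j * Q I (u + p i * hbar) * Q (insert i (insert j I)) (u - p i * hbar))
    {I : List ι} {i j : ι} (hi : i ∉ I) (hj : j ∉ I) (hij : i ≠ j) :
    (p i = p j → ∀ u : ℂ,
      QCF z w p f Q I u * QCF z w p f Q (I ++ [i, j]) u =
        QCF z w p f Q (I ++ [i]) (u + p i * hbar) * QCF z w p f Q (I ++ [j]) (u - p i * hbar) -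
          QCF z w p f Q (I ++ [i]) (u - p i * hbar) *
            QCF z w p f Q (I ++ [j]) (u + p i * hbar)) ∧
    (p i = -p j → ∀ u : ℂ,
      QCF z w p f Q (I ++ [i]) u * QCF z w p f Q (I ++ [j]) u =
        QCF z w p f Q I (u - p i * hbar) * QCF z w p f Q (I ++ [i, j]) (u + p i * hbar) -
          QCF z w p f Q I (u + p i * hbar) * QCF z w p f Q (I ++ [i, j]) (u - p i * hbar)) := by
  have hw0 (l : ι) : w l ≠ 0 := fun h => hz0 l (by rw [← hw l, h, zero_pow two_ne_zero])
  have hpi : p i * p i = 1 := mul_self_eq_one_iff.mpr (hp i)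
  have hi' : i ∉ I.toFinset := List.mem_toFinset.not.mpr hi
  have hj' : j ∉ I.toFinset := List.mem_toFinset.not.mpr hj
  exact ⟨fun hpij u => QCF_mul_QCF_append_pair_of_eq hf hw0 hw hpi hpij
      (hQQ1 I.toFinset i hi' j hj' hij hpij u),
    fun hpij u => QCF_append_singleton_mul_of_eq_neg hf hw0 hw (hzd.ne hij) hpi hpij
      (hQQ2 I.toFinset i hi' j hj' hij hpij u)⟩

end QQ

/-- **Removing the twist turns the twisted QQ-relations into coefficient-free
QQ-relations.** -/
theorem untwisted_QQ {ι : Type*} [Fintype ι] [DecidableEq ι]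
    (hbar : ℂ) (hbar_ne : hbar ≠ 0)
    (Bos : Finset ι) (p : ι → ℤ) (hp : ∀ i, p i = if i ∈ Bos then 1 else -1)
    (z w : ι → ℂ) (hz0 : ∀ i, z i ≠ 0) (hzd : Function.Injective z)
    (hw : ∀ i, w i ^ 2 = z i)
    (f : ι → ℂ → ℂ) (hf0 : ∀ i u, f i u ≠ 0)
    (hfsh : ∀ i : ι, ∀ k : ℤ, ∀ u : ℂ, f i (u + (k : ℂ) * hbar) = w i ^ (p i * k) * f i u)
    (Q : Finset ι → ℂ → ℂ)
    (hQQ1 : ∀ I : Finset ι, ∀ i ∉ I, ∀ j ∉ I, i ≠ j → p i = p j → ∀ u : ℂ,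
      (z i - z j) * (Q I u * Q (insert i (insert j I)) u) =
        z i * Q (insert i I) (u + (p i : ℂ) * hbar) * Q (insert j I) (u - (p i : ℂ) * hbar) -
        z j * Q (insert i I) (u - (p i : ℂ) * hbar) * Q (insert j I) (u + (p i : ℂ) * hbar))
    (hQQ2 : ∀ I : Finset ι, ∀ i ∉ I, ∀ j ∉ I, i ≠ j → p i = -p j → ∀ u : ℂ,
      (z i - z j) * (Q (insert i I) u * Q (insert j I) u) =
        z i * Q I (u - (p i : ℂ) * hbar) * Q (insert i (insert j I)) (u + (p i : ℂ) * hbar) -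
        z j * Q I (u + (p i : ℂ) * hbar) * Q (insert i (insert j I)) (u - (p i : ℂ) * hbar)) :
    ∀ I : List ι, I.Nodup → ∀ i j : ι, i ∉ I → j ∉ I → i ≠ j →
      (p i = p j → ∀ u : ℂ,
        QCF z w p f Q I u * QCF z w p f Q (I ++ [i, j]) u =
          QCF z w p f Q (I ++ [i]) (u + (p i : ℂ) * hbar) *
              QCF z w p f Q (I ++ [j]) (u - (p i : ℂ) * hbar) -
            QCF z w p f Q (I ++ [i]) (u - (p i : ℂ) * hbar) *
              QCF z w p f Q (I ++ [j]) (u + (p i : ℂ) * hbar)) ∧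
      (p i = -p j → ∀ u : ℂ,
        QCF z w p f Q (I ++ [i]) u * QCF z w p f Q (I ++ [j]) u =
          QCF z w p f Q I (u - (p i : ℂ) * hbar) *
              QCF z w p f Q (I ++ [i, j]) (u + (p i : ℂ) * hbar) -
            QCF z w p f Q I (u + (p i : ℂ) * hbar) *
              QCF z w p f Q (I ++ [i, j]) (u - (p i : ℂ) * hbar)) := by
  intro I _ i j hi hj hij
  have hp' (l : ι) : p l = 1 ∨ p l = -1 := by rw [hp l]; exact ite_eq_or_eq ..
  exact untwisted_QQ_general hp' hz0 hzd hw hfsh hQQ1 hQQ2 hi hj hij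

end Stmt15
end

section
/- The Y-system follows from the Hirota T-system. Suppose the family T_{a,s} satisfies T_{a,s}^{[−1]}·T_{a,s}^{[+1]} = T_{a,s−1}·T_{a,s+1} + T_{a−1,s}·T_{a+1,s} pointwise on ℂ for all a, s ∈ ℤ. Define Y_{a,s} := (T_{a,s−1}·T_{a,s+1})/(T_{a−1,s}·T_{a+1,s}) wherever the denominator is nonzero. Then for every a, s ∈ ℤ and every u ∈ ℂ such that all the values T_{a′,s′}(u+kħ) with |a′−a| ≤ 2, |s′−s| ≤ 2 and k ∈ {−1,0,1} are nonzero, one has Y_{a,s}^{[−1]}(u)·Y_{a,s}^{[+1]}(u) = (1+Y_{a,s−1}(u))·(1+Y_{a,s+1}(u)) / ((1+Y_{a−1,s}(u)^{−1})·(1+Y_{a+1,s}(u)^{−1})). -/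
/-!
The Hirota equation says that `1 + Y` and `1 + Y⁻¹` at a site `(a, s)` are both
`T⁻ T⁺ = T_{a,s}(u - ħ) T_{a,s}(u + ħ)`, divided by one or the other of the two products it adds.
In the quotient of the right-hand side of the Y-system, the values of `T` at the corners
`(a ± 1, s ± 1)` therefore cancel, and the remaining factors `T⁻ T⁺` at the four neighbours of
`(a, s)` are those of `Y_{a,s}(u - ħ) Y_{a,s}(u + ħ)`.
-/

namespace Stmt18

/-- The Y-functions associated to a family of T-functions. -/
noncomputable def Y (T : ℤ → ℤ → ℂ → ℂ) (a s : ℤ) (u : ℂ) : ℂ :=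
  (T a (s - 1) u * T a (s + 1) u) / (T (a - 1) s u * T (a + 1) s u)

section Semifield

variable {G K : Type*} [AddGroup G] [Semifield K]

/-- The Hirota equation (T-system) with shift `ħ`, for functions on an additive group with values
in a semifield. -/
def IsTSystem (ħ : G) (T : ℤ → ℤ → G → K) : Prop :=
  ∀ a s : ℤ, ∀ u : G,
    T a s (u - ħ) * T a s (u + ħ) =
      T a (s - 1) u * T a (s + 1) u + T (a - 1) s u * T (a + 1) s u

/-- The Y-functions of a family of semifield-valued functions; `Y` is the case of functions
`ℂ → ℂ`. Where the denominator vanishes, the value is the junk value `0`. -/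
def yFunction {X : Type*} (T : ℤ → ℤ → X → K) (a s : ℤ) (u : X) : K :=
  (T a (s - 1) u * T a (s + 1) u) / (T (a - 1) s u * T (a + 1) s u)

variable {ħ : G} {T : ℤ → ℤ → G → K} {a s : ℤ} {u : G}

theorem IsTSystem.one_add_yFunction (hT : IsTSystem ħ T)
    (h_den : T (a - 1) s u * T (a + 1) s u ≠ 0) :
    1 + yFunction T a s u =
      T a s (u - ħ) * T a s (u + ħ) / (T (a - 1) s u * T (a + 1) s u) := by
  rw [hT, add_div, div_self h_den, add_comm, yFunction]

theorem IsTSystem.one_add_inv_yFunction (hT : IsTSystem ħ T)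
    (h_num : T a (s - 1) u * T a (s + 1) u ≠ 0) :
    1 + (yFunction T a s u)⁻¹ =
      T a s (u - ħ) * T a s (u + ħ) / (T a (s - 1) u * T a (s + 1) u) := by
  rw [hT, add_div, div_self h_num, yFunction, inv_div]

/-- The nonvanishing conditions concern the denominators of the six values of `yFunction`. -/
theorem ysystem_of_hirota_general (hT : IsTSystem ħ T)
    (h_neighbours : ∀ b t : ℤ, |b - a| + |t - s| = 1 → T (b - 1) t u * T (b + 1) t u ≠ 0)
    (h_sub : T (a - 1) s (u - ħ) * T (a + 1) s (u - ħ) ≠ 0)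
    (h_add : T (a - 1) s (u + ħ) * T (a + 1) s (u + ħ) ≠ 0) :
    yFunction T a s (u - ħ) * yFunction T a s (u + ħ) =
      (1 + yFunction T a (s - 1) u) * (1 + yFunction T a (s + 1) u) /
        ((1 + (yFunction T (a - 1) s u)⁻¹) * (1 + (yFunction T (a + 1) s u)⁻¹)) := by
  have h_below := h_neighbours a (s - 1) (by simp)
  have h_above := h_neighbours a (s + 1) (by simp)
  obtain ⟨h_left_below, h_right_below⟩ := mul_ne_zero_iff.mp h_below
  obtain ⟨h_left_above, h_right_above⟩ := mul_ne_zero_iff.mp h_above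
  obtain ⟨h_left_sub, h_right_sub⟩ := mul_ne_zero_iff.mp h_sub
  obtain ⟨h_left_add, h_right_add⟩ := mul_ne_zero_iff.mp h_add
  rw [hT.one_add_yFunction h_below, hT.one_add_yFunction h_above,
    hT.one_add_inv_yFunction (mul_ne_zero h_left_below h_left_above),
    hT.one_add_inv_yFunction (mul_ne_zero h_right_below h_right_above), yFunction, yFunction]
  field_simp

end Semifield

/-- **The Y-system follows from the Hirota T-system.** -/
theorem ysystem_of_hirota (hbar : ℂ) (hbar_ne : hbar ≠ 0) (T : ℤ → ℤ → ℂ → ℂ)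
    (hT : ∀ a s : ℤ, ∀ u : ℂ,
      T a s (u - hbar) * T a s (u + hbar) =
        T a (s - 1) u * T a (s + 1) u + T (a - 1) s u * T (a + 1) s u) :
    ∀ a s : ℤ, ∀ u : ℂ,
      (∀ a' s' k : ℤ, |a' - a| ≤ 2 → |s' - s| ≤ 2 → |k| ≤ 1 →
        T a' s' (u + (k : ℂ) * hbar) ≠ 0) →
      Y T a s (u - hbar) * Y T a s (u + hbar) =
        (1 + Y T a (s - 1) u) * (1 + Y T a (s + 1) u) /
          ((1 + (Y T (a - 1) s u)⁻¹) * (1 + (Y T (a + 1) s u)⁻¹)) := by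
  intro a s u h
  have h_near (a' s' : ℤ) (ha : |a' - a| ≤ 2) (hs : |s' - s| ≤ 2) :
      T a' s' (u - hbar) ≠ 0 ∧ T a' s' u ≠ 0 ∧ T a' s' (u + hbar) ≠ 0 :=
    ⟨by simpa [sub_eq_add_neg] using h a' s' (-1) ha hs (by simp),
      by simpa using h a' s' 0 ha hs (by simp),
      by simpa using h a' s' 1 ha hs (by simp)⟩
  have h_left := h_near (a - 1) s (by simp) (by simp)
  have h_right := h_near (a + 1) s (by simp) (by simp)
  refine ysystem_of_hirota_general hT (fun b t hbt ↦ ?_) (mul_ne_zero h_left.1 h_right.1)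
    (mul_ne_zero h_left.2.2 h_right.2.2)
  exact mul_ne_zero (h_near (b - 1) t (by grind) (by grind)).2.1
    (h_near (b + 1) t (by grind) (by grind)).2.1

end Stmt18
end

section
/- Y-system-like equation for the Bäcklund flow. Define 𝔄_{a,s} := z·(T_{a+1,s−1}·T′_{a,s+1})/(T_{a,s}·T′_{a+1,s}) and 𝔄′_{a,s} := z′·(T′_{a+1,s−1}·T″_{a,s+1})/(T′_{a,s}·T″_{a+1,s}) wherever the denominators are nonzero. Then for every a, s ∈ ℤ and every u ∈ ℂ at which all the values of T, T′, T″ occurring in the following identity (at the appropriately shifted arguments u−ħ, u, u+ħ) are nonzero, one has 𝔄_{a+1,s}^{[−1]}(u) · 𝔄′_{a,s}^{[+1]}(u) = (1+𝔄_{a+1,s−1}(u))·(1+𝔄′_{a,s+1}(u)) / ((1+𝔄_{a,s}(u)^{−1})·(1+𝔄′_{a+1,s}(u)^{−1})). -/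
namespace Stmt19

/-- The Y-type function `𝔄_{a,s}` associated to a Bäcklund pair `(T, T')`. -/
noncomputable def A (z : ℂ) (T T' : ℤ → ℤ → ℂ → ℂ) (a s : ℤ) (u : ℂ) : ℂ :=
  z * T (a + 1) (s - 1) u * T' a (s + 1) u / (T a s u * T' (a + 1) s u)

/-!
Write the Bäcklund relation as `P - Q = R`, where `P` is the product of the shifted values. Then
`𝔄 = R / Q`, hence `1 + 𝔄 = P / Q` and `1 + 𝔄⁻¹ = P / R`. In the Y-system each side is a product of
such ratios: on the right-hand side the unshifted values all cancel, and the shifted ones regroup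
into the two factors on the left-hand side.
-/

section General

variable {G K : Type*} [Field K]

/-- The Bäcklund relation with spectral shift `ħ` between `T` and `T'` at the lattice point `(a, s)`
and the point `u`, for functions on an additive group `G` with values in a field `K`. -/
def BacklundRelation [AddGroup G] (ħ : G) (z : K) (T T' : ℤ → ℤ → G → K) (a s : ℤ) (u : G) : Prop :=
  T (a + 1) s (u - ħ) * T' a s (u + ħ) - T a s u * T' (a + 1) s u =
    z * T (a + 1) (s - 1) u * T' a (s + 1) u

/-- The function `𝔄_{a,s}` of a pair `(T, T')`, for functions on `G` with values in a field `K`;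
`A` is the case `G = K = ℂ`. -/
def yFunction (z : K) (T T' : ℤ → ℤ → G → K) (a s : ℤ) (u : G) : K :=
  z * T (a + 1) (s - 1) u * T' a (s + 1) u / (T a s u * T' (a + 1) s u)

variable {z z' : K} {T T' T'' : ℤ → ℤ → G → K} {a s : ℤ} {u : G}

theorem yFunction_ne_zero (hz : z ≠ 0)
    (hT₁ : T (a + 1) (s - 1) u ≠ 0) (hT'₁ : T' a (s + 1) u ≠ 0)
    (hT : T a s u ≠ 0) (hT' : T' (a + 1) s u ≠ 0) :
    yFunction z T T' a s u ≠ 0 :=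
  div_ne_zero (mul_ne_zero (mul_ne_zero hz hT₁) hT'₁) (mul_ne_zero hT hT')

variable [AddGroup G] {ħ : G}

theorem BacklundRelation.one_add_yFunction (hB : BacklundRelation ħ z T T' a s u)
    (hT : T a s u ≠ 0) (hT' : T' (a + 1) s u ≠ 0) :
    1 + yFunction z T T' a s u =
      T (a + 1) s (u - ħ) * T' a s (u + ħ) / (T a s u * T' (a + 1) s u) := by
  rw [yFunction, one_add_div (mul_ne_zero hT hT'), ← hB, add_sub_cancel]

theorem BacklundRelation.one_add_inv_yFunction (hB : BacklundRelation ħ z T T' a s u)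
    (hY : yFunction z T T' a s u ≠ 0) :
    1 + (yFunction z T T' a s u)⁻¹ =
      T (a + 1) s (u - ħ) * T' a s (u + ħ) /
        (z * T (a + 1) (s - 1) u * T' a (s + 1) u) := by
  rw [yFunction, inv_div, one_add_div (div_ne_zero_iff.mp hY).1, ← hB, sub_add_cancel]

theorem ysystem_backlund_general (hz : z ≠ 0) (hz' : z' ≠ 0)
    (hB : ∀ a s : ℤ, BacklundRelation ħ z T T' a s u)
    (hB' : ∀ a s : ℤ, BacklundRelation ħ z' T' T'' a s u)
    (hT_sub : T (a + 1) s (u - ħ) ≠ 0) (hT'_sub : T' (a + 2) s (u - ħ) ≠ 0)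
    (hT'_add : T' a s (u + ħ) ≠ 0) (hT''_add : T'' (a + 1) s (u + ħ) ≠ 0)
    (hT₁ : T (a + 1) (s - 1) u ≠ 0) (hT : T a s u ≠ 0)
    (hT'₁ : T' (a + 1) s u ≠ 0) (hT'₂ : T' (a + 2) (s - 1) u ≠ 0) (hT' : T' a (s + 1) u ≠ 0)
    (hT''₁ : T'' (a + 1) (s + 1) u ≠ 0) (hT''₂ : T'' (a + 2) s u ≠ 0) :
    yFunction z T T' (a + 1) s (u - ħ) * yFunction z' T' T'' a s (u + ħ) =
      (1 + yFunction z T T' (a + 1) (s - 1) u) * (1 + yFunction z' T' T'' a (s + 1) u) /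
        ((1 + (yFunction z T T' a s u)⁻¹) * (1 + (yFunction z' T' T'' (a + 1) s u)⁻¹)) := by
  have h_two : a + 2 = a + 1 + 1 := by ring
  rw [h_two] at hT'_sub hT'₂ hT''₂
  have hY : yFunction z T T' a s u ≠ 0 := yFunction_ne_zero hz hT₁ hT' hT hT'₁
  have hY' : yFunction z' T' T'' (a + 1) s u ≠ 0 := yFunction_ne_zero hz' hT'₂ hT''₁ hT'₁ hT''₂
  rw [(hB (a + 1) (s - 1)).one_add_yFunction hT₁ hT'₂,
    (hB' a (s + 1)).one_add_yFunction hT' hT''₁,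
    (hB a s).one_add_inv_yFunction hY, (hB' (a + 1) s).one_add_inv_yFunction hY']
  simp only [yFunction]
  field_simp

end General

/-- **Y-system-like equation for the Bäcklund flow.** -/
theorem ysystem_backlund (hbar : ℂ) (hbar_ne : hbar ≠ 0) (z z' : ℂ)
    (hz : z ≠ 0) (hz' : z' ≠ 0)
    (T T' T'' : ℤ → ℤ → ℂ → ℂ)
    (hB1 : ∀ a s : ℤ, ∀ u : ℂ,
      T (a + 1) s (u - hbar) * T' a s (u + hbar) - T a s u * T' (a + 1) s u =
        z * T (a + 1) (s - 1) u * T' a (s + 1) u)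
    (hB2 : ∀ a s : ℤ, ∀ u : ℂ,
      T' (a + 1) s (u - hbar) * T'' a s (u + hbar) - T' a s u * T'' (a + 1) s u =
        z' * T' (a + 1) (s - 1) u * T'' a (s + 1) u) :
    ∀ a s : ℤ, ∀ u : ℂ,
      T (a + 2) (s - 1) (u - hbar) ≠ 0 → T' (a + 1) (s + 1) (u - hbar) ≠ 0 →
      T (a + 1) s (u - hbar) ≠ 0 → T' (a + 2) s (u - hbar) ≠ 0 →
      T' (a + 1) (s - 1) (u + hbar) ≠ 0 → T'' a (s + 1) (u + hbar) ≠ 0 →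
      T' a s (u + hbar) ≠ 0 → T'' (a + 1) s (u + hbar) ≠ 0 →
      T (a + 2) (s - 2) u ≠ 0 → T (a + 1) (s - 1) u ≠ 0 → T a s u ≠ 0 →
      T' (a + 1) s u ≠ 0 → T' (a + 2) (s - 1) u ≠ 0 → T' a (s + 1) u ≠ 0 →
      T'' a (s + 2) u ≠ 0 → T'' (a + 1) (s + 1) u ≠ 0 → T'' (a + 2) s u ≠ 0 →
      A z T T' (a + 1) s (u - hbar) * A z' T' T'' a s (u + hbar) =
        (1 + A z T T' (a + 1) (s - 1) u) * (1 + A z' T' T'' a (s + 1) u) /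
          ((1 + (A z T T' a s u)⁻¹) * (1 + (A z' T' T'' (a + 1) s u)⁻¹)) := by
  intro a s u _ _ h₁ h₂ _ _ h₃ h₄ _ h₅ h₆ h₇ h₈ h₉ _ h₁₀ h₁₁
  exact ysystem_backlund_general hz hz' (hB1 · · u) (hB2 · · u) h₁ h₂ h₃ h₄ h₅ h₆ h₇ h₈ h₉ h₁₀ h₁₁

end Stmt19
end
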